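/- In the complex numbers, F(1/8,5/8) − 2√3·F(3/8,7/8) − 4i√3·F(5/8,9/8) − 8i·F(7/8,11/8) = 2·(1 − i√2 − √3)·(F(3/8,7/8) + 2i·F(5/8,9/8)). -/

import Mathlib

/-- The Pochhammer symbol (x)_k = x(x+1)⋯(x+k−1). -/
noncomputable def poch (x : ℝ) (k : ℕ) : ℝ := ∏ i ∈ Finset.range k, (x + i)

/-- The hypergeometric series ₃F₂(a1,a2,a3;b1,b2;1). -/
noncomputable def threeF2 (a1 a2 a3 b1 b2 : ℝ) : ℝ :=
  ∑' k : ℕ, poch a1 k * poch a2 k * poch a3 k /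
    (poch b1 k * poch b2 k * (Nat.factorial k : ℝ))

/-- The Beta function B(a,b) = Γ(a)Γ(b)/Γ(a+b). -/
noncomputable def betaFn (a b : ℝ) : ℝ :=
  Real.Gamma a * Real.Gamma b / Real.Gamma (a + b)

/-- The normalized hypergeometric value
F(r,s) = (2^{1−4r}·B(r,s−r)/N(r)) · ₃F₂(1/2,1/2,r;1,s;1), where N(r) = 2·den(r). -/
noncomputable def Fval (r s : ℚ) : ℝ :=
  (2:ℝ) ^ ((1:ℝ) - 4 * (r:ℝ)) * betaFn (r:ℝ) ((s:ℝ) - (r:ℝ)) / (2 * (r.den : ℝ)) *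
    threeF2 (1/2) (1/2) (r:ℝ) 1 (s:ℝ)

section

open Real Set Filter Topology MeasureTheory

/-- The coefficients `(1/2)_n / n!` of the power series of `(1 - z)^(-1/2)`. -/
noncomputable def halfCoeff (n : ℕ) : ℝ := poch (1 / 2) n / (Nat.factorial n : ℝ)

/-- The principal branch of `(1 - z)^(-1/2)`. -/
noncomputable def invSqrt (z : ℂ) : ℂ := (1 - z) ^ (-(1 / 2) : ℂ)

/-- The hypergeometric function `₂F₁(1/2, 1/2; 1; z)` on the open unit disc. -/
noncomputable def ellE (z : ℂ) : ℂ := ∑' n : ℕ, ((halfCoeff n : ℂ) ^ 2) * z ^ n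

lemma poch_zero (x : ℝ) : poch x 0 = 1 := by simp [poch]

lemma poch_succ (x : ℝ) (n : ℕ) : poch x (n + 1) = poch x n * (x + n) := by
  simp [poch, Finset.prod_range_succ]

lemma halfCoeff_succ (n : ℕ) : halfCoeff (n + 1) = halfCoeff n * ((1 / 2 + n) / (n + 1)) := by
  have : (Nat.factorial n : ℝ) ≠ 0 := by positivity
  rw [halfCoeff, halfCoeff, poch_succ, Nat.factorial_succ]
  push_cast
  field_simp

lemma halfCoeff_nonneg (n : ℕ) : 0 ≤ halfCoeff n := by
  unfold halfCoeff poch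
  positivity

lemma halfCoeff_le_one (n : ℕ) : halfCoeff n ≤ 1 := by
  induction n with
  | zero => simp [halfCoeff, poch_zero]
  | succ n ih =>
    rw [halfCoeff_succ]
    refine mul_le_one₀ ih (by positivity) ?_
    rw [div_le_one (by positivity)]
    linarith

lemma norm_halfCoeff_le (n : ℕ) : ‖(halfCoeff n : ℂ)‖ ≤ 1 := by
  rw [Complex.norm_real, Real.norm_of_nonneg (halfCoeff_nonneg n)]
  exact halfCoeff_le_one n

lemma ringChoose_half (n : ℕ) :
    Ring.choose ((1 / 2 : ℂ) + n - 1) n = (halfCoeff n : ℂ) := by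
  have h := Ring.factorial_nsmul_multichoose_eq_ascPochhammer (1 / 2 : ℂ) n
  have h2 : Ring.choose ((1 / 2 : ℂ) + n - 1) n = Ring.multichoose (1 / 2 : ℂ) n := by
    rw [Ring.choose]
    congr 1
    ring
  have hf : (Nat.factorial n : ℂ) ≠ 0 := by exact_mod_cast Nat.factorial_ne_zero n
  have h3 : ∀ m : ℕ, (ascPochhammer ℂ m).eval (1 / 2 : ℂ) = (poch (1 / 2) m : ℂ) := by
    intro m
    induction m with
    | zero => simp [poch]
    | succ m ih => rw [ascPochhammer_succ_eval, ih, poch_succ]; push_cast; ring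
  rw [Polynomial.ascPochhammer_smeval_eq_eval, h3, nsmul_eq_mul] at h
  rw [h2, halfCoeff]
  push_cast
  field_simp
  rw [mul_comm, h]

lemma hasSum_invSqrt {z : ℂ} (hz : ‖z‖ < 1) :
    HasSum (fun n : ℕ => (halfCoeff n : ℂ) * z ^ n) (invSqrt z) := by
  have h := (Complex.one_div_one_sub_cpow_hasFPowerSeriesOnBall_zero (1 / 2)).hasSum
    (y := z) (by simpa [enorm_eq_nnnorm, ← NNReal.coe_lt_coe] using hz)
  simp only [FormalMultilinearSeries.ofScalars_apply_eq, zero_add, ringChoose_half,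
    smul_eq_mul] at h
  rw [invSqrt, Complex.cpow_neg, ← one_div]
  exact h

lemma summable_norm_coeff_mul_pow {a : ℕ → ℂ} (ha : ∀ n, ‖a n‖ ≤ 1) {z : ℂ} (hz : ‖z‖ < 1) :
    Summable (fun n : ℕ => ‖a n * z ^ n‖) := by
  refine Summable.of_nonneg_of_le (fun n => norm_nonneg _) (fun n => ?_)
    (summable_geometric_of_lt_one (norm_nonneg z) hz)
  rw [norm_mul, norm_pow]
  exact mul_le_of_le_one_left (by positivity) (ha n)

lemma norm_halfCoeff_sq_le (n : ℕ) : ‖(halfCoeff n : ℂ) ^ 2‖ ≤ 1 := by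
  rw [norm_pow]
  exact pow_le_one₀ (norm_nonneg _) (norm_halfCoeff_le n)

lemma hasSum_ellE {z : ℂ} (hz : ‖z‖ < 1) :
    HasSum (fun n : ℕ => ((halfCoeff n : ℂ) ^ 2) * z ^ n) (ellE z) :=
  (summable_norm_coeff_mul_pow norm_halfCoeff_sq_le hz).of_norm.hasSum

lemma integral_cexp_int (d : ℤ) :
    ∫ x in (-π)..π, Complex.exp (d * (x * Complex.I)) = if d = 0 then 2 * (π : ℂ) else 0 := by
  split_ifs with hd
  · simp [hd]; ring
  · have hc : (d : ℂ) * Complex.I ≠ 0 := by simp [hd]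
    have : ∀ x : ℝ, Complex.exp (d * (x * Complex.I)) = Complex.exp ((d * Complex.I) * x) := by
      intro x; congr 1; ring
    simp_rw [this]
    rw [integral_exp_mul_complex hc, div_eq_zero_iff]
    left
    rw [sub_eq_zero, Complex.exp_eq_exp_iff_exists_int]
    exact ⟨d, by push_cast; ring⟩

lemma norm_mul_cexp (k : ℂ) (x : ℝ) : ‖k * Complex.exp (x * Complex.I)‖ = ‖k‖ := by
  rw [norm_mul, Complex.norm_exp_ofReal_mul_I, mul_one]

lemma norm_mul_cexp_neg (k : ℂ) (x : ℝ) : ‖k * Complex.exp (-(x * Complex.I))‖ = ‖k‖ := by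
  rw [← neg_mul, ← Complex.ofReal_neg, norm_mul_cexp]

lemma integral_invSqrt_mul_invSqrt {k : ℂ} (hk : ‖k‖ < 1) :
    ∫ x in (-π)..π, invSqrt (k * Complex.exp (x * Complex.I)) *
      invSqrt (k * Complex.exp (-(x * Complex.I))) = 2 * π * ellE (k ^ 2) := by
  set F : ℕ × ℕ → ℝ → ℂ := fun p x =>
    ((halfCoeff p.1 : ℂ) * (k * Complex.exp (x * Complex.I)) ^ p.1) *
      ((halfCoeff p.2 : ℂ) * (k * Complex.exp (-(x * Complex.I))) ^ p.2) with hF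
  have hsum : ∀ x : ℝ, HasSum (fun p => F p x) (invSqrt (k * Complex.exp (x * Complex.I)) *
      invSqrt (k * Complex.exp (-(x * Complex.I)))) := by
    intro x
    have h1 : ‖k * Complex.exp (x * Complex.I)‖ < 1 := by rwa [norm_mul_cexp]
    have h2 : ‖k * Complex.exp (-(x * Complex.I))‖ < 1 := by rwa [norm_mul_cexp_neg]
    have hs := summable_mul_of_summable_norm
      (summable_norm_coeff_mul_pow norm_halfCoeff_le h1)
      (summable_norm_coeff_mul_pow norm_halfCoeff_le h2)
    have hm := (hasSum_invSqrt h1).mul (hasSum_invSqrt h2) hs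
    exact hm
  have hbs : Summable (fun p : ℕ × ℕ => ‖k‖ ^ p.1 * ‖k‖ ^ p.2) := by
    have := summable_geometric_of_lt_one (norm_nonneg k) hk
    exact this.mul_of_nonneg this (fun n => by positivity) (fun n => by positivity)
  have hint := intervalIntegral.hasSum_integral_of_dominated_convergence (μ := volume)
    (a := -π) (b := π) (F := F) (fun p _ => ‖k‖ ^ p.1 * ‖k‖ ^ p.2)
    (fun p => by
      have : Continuous (F p) := by simp only [hF]; fun_prop
      exact this.aestronglyMeasurable)
    (fun p => by
      refine .of_forall fun x _ => ?_
      simp only [hF]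
      rw [norm_mul, norm_mul, norm_mul, norm_pow, norm_pow, norm_mul_cexp, norm_mul_cexp_neg]
      have h1 := norm_halfCoeff_le p.1
      have h2 := norm_halfCoeff_le p.2
      gcongr
      · exact mul_le_of_le_one_left (by positivity) h1
      · exact mul_le_of_le_one_left (by positivity) h2)
    (.of_forall fun x _ => hbs) (by simp)
    (.of_forall fun x _ => hsum x)
  have hval : ∀ p : ℕ × ℕ, ∫ x in (-π)..π, F p x =
      (halfCoeff p.1 * halfCoeff p.2 * k ^ (p.1 + p.2) : ℂ) *
        if ((p.1 : ℤ) - p.2) = 0 then 2 * (π : ℂ) else 0 := by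
    intro p
    rw [← integral_cexp_int, ← intervalIntegral.integral_const_mul]
    congr 1
    ext x
    simp only [hF]
    rw [mul_pow, mul_pow, ← Complex.exp_nat_mul, ← Complex.exp_nat_mul, pow_add]
    have : Complex.exp (((p.1 : ℤ) - p.2 : ℤ) * (x * Complex.I)) =
        Complex.exp (p.1 * (x * Complex.I)) * Complex.exp (p.2 * -(x * Complex.I)) := by
      rw [← Complex.exp_add]; congr 1; push_cast; ring
    rw [this]
    ring
  simp_rw [hval] at hint
  have hinj : Function.Injective (fun n : ℕ => (n, n)) := fun a b h => by simpa using h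
  rw [← hinj.hasSum_iff] at hint
  · have h3 := (hasSum_ellE (z := k ^ 2)
      (by rw [norm_pow]; exact pow_lt_one₀ (norm_nonneg _) hk two_ne_zero)).mul_left (2 * (π : ℂ))
    refine hint.unique (h3.congr_fun ?_)
    intro n
    simp only [Function.comp, sub_self, if_true]
    ring
  · rintro ⟨m, n⟩ hmn
    have : ((m : ℤ) - n) ≠ 0 := by
      intro h
      have : m = n := by omega
      exact hmn ⟨m, by simp [this]⟩
    simp [this]

lemma norm_invSqrt (z : ℂ) : ‖invSqrt z‖ = ‖1 - z‖ ^ (-(1 / 2) : ℝ) := by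
  rw [invSqrt, ← Complex.norm_cpow_real]
  norm_num

lemma rpow_neg_half_mul_le_aux {a b s : ℝ} (ha : 0 ≤ a) (hs : 0 < s) (h : s ≤ a + b)
    (hab : a ≤ b) : a ^ (-(1 / 2) : ℝ) * b ^ (-(1 / 2) : ℝ) ≤
      (s / 2) ^ (-(1 / 4) : ℝ) * a ^ (-(3 / 4) : ℝ) := by
  rcases ha.eq_or_lt with rfl | ha
  · rw [Real.zero_rpow (by norm_num), Real.zero_rpow (by norm_num)]; simp
  have hb : 0 < b := ha.trans_le hab
  have h1 : b ^ (-(1 / 4) : ℝ) ≤ (s / 2) ^ (-(1 / 4) : ℝ) :=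
    Real.rpow_le_rpow_of_nonpos (by positivity) (by linarith) (by norm_num)
  have h2 : b ^ (-(1 / 4) : ℝ) ≤ a ^ (-(1 / 4) : ℝ) :=
    Real.rpow_le_rpow_of_nonpos ha hab (by norm_num)
  have h3 : b ^ (-(1 / 2) : ℝ) = b ^ (-(1 / 4) : ℝ) * b ^ (-(1 / 4) : ℝ) := by
    rw [← Real.rpow_add hb]; norm_num
  have h4 : a ^ (-(3 / 4) : ℝ) = a ^ (-(1 / 2) : ℝ) * a ^ (-(1 / 4) : ℝ) := by
    rw [← Real.rpow_add ha]; norm_num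
  rw [h3, h4]
  calc a ^ (-(1 / 2) : ℝ) * (b ^ (-(1 / 4) : ℝ) * b ^ (-(1 / 4) : ℝ))
      ≤ a ^ (-(1 / 2) : ℝ) * ((s / 2) ^ (-(1 / 4) : ℝ) * a ^ (-(1 / 4) : ℝ)) := by gcongr
    _ = _ := by ring

lemma rpow_neg_half_mul_le {a b s : ℝ} (ha : 0 ≤ a) (hb : 0 ≤ b) (hs : 0 < s) (h : s ≤ a + b) :
    a ^ (-(1 / 2) : ℝ) * b ^ (-(1 / 2) : ℝ) ≤
      (s / 2) ^ (-(1 / 4) : ℝ) * (a ^ (-(3 / 4) : ℝ) + b ^ (-(3 / 4) : ℝ)) := by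
  have h1 : 0 ≤ (s / 2) ^ (-(1 / 4) : ℝ) * a ^ (-(3 / 4) : ℝ) := by positivity
  have h2 : 0 ≤ (s / 2) ^ (-(1 / 4) : ℝ) * b ^ (-(3 / 4) : ℝ) := by positivity
  rw [mul_add]
  rcases le_total a b with hab | hab
  · linarith [rpow_neg_half_mul_le_aux ha hs h hab]
  · rw [mul_comm (a ^ _)]
    linarith [rpow_neg_half_mul_le_aux hb hs (by linarith) hab]

lemma norm_one_sub_le_two_mul {w : ℂ} (hw : ‖w‖ = 1) {ρ : ℝ} (h0 : 0 ≤ ρ) (h1 : ρ ≤ 1) :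
    ‖1 - w‖ ≤ 2 * ‖1 - ρ * w‖ := by
  have hρ : ‖(ρ : ℂ) * w‖ = ρ := by
    rw [norm_mul, hw, Complex.norm_real, Real.norm_of_nonneg h0, mul_one]
  have h2 : 1 - ρ ≤ ‖1 - ρ * w‖ := by
    have := norm_sub_norm_le (1 : ℂ) (ρ * w)
    rwa [hρ, norm_one] at this
  have h3 : ‖1 - w‖ ≤ ‖1 - ρ * w‖ + ‖(ρ * w - w : ℂ)‖ := by
    have := norm_add_le (1 - ρ * w) (ρ * w - w)
    simpa using this
  have h4 : ‖(ρ * w - w : ℂ)‖ = 1 - ρ := by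
    rw [show (ρ * w - w : ℂ) = ((ρ - 1 : ℝ) : ℂ) * w by push_cast; ring, norm_mul, hw,
      Complex.norm_real, Real.norm_of_nonpos (by linarith)]
    ring
  linarith

lemma norm_cexp_I (x : ℝ) : ‖Complex.exp (x * Complex.I)‖ = 1 :=
  Complex.norm_exp_ofReal_mul_I x

/-- The weight `|1 - e^{ix}|^(-3/4)`. -/
noncomputable def circleWeight (x : ℝ) : ℝ := ‖1 - Complex.exp (x * Complex.I)‖ ^ (-(3 / 4) : ℝ)

lemma circleWeight_nonneg (x : ℝ) : 0 ≤ circleWeight x := by unfold circleWeight; positivity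

lemma circleWeight_periodic : Function.Periodic circleWeight (2 * π) := by
  intro x
  unfold circleWeight
  congr 3
  rw [Complex.exp_eq_exp_iff_exists_int]
  exact ⟨1, by push_cast; ring⟩

lemma measurable_circleWeight : Measurable circleWeight := by
  unfold circleWeight
  fun_prop

lemma norm_one_sub_cexp (x : ℝ) : ‖1 - Complex.exp (x * Complex.I)‖ = 2 * |Real.sin (x / 2)| := by
  rw [norm_sub_rev, mul_comm (x : ℂ), Complex.norm_exp_I_mul_ofReal_sub_one, norm_mul]
  simp

lemma mul_le_norm_one_sub_cexp {x : ℝ} (h0 : 0 ≤ x) (hx : x ≤ π) :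
    2 / π * x ≤ ‖1 - Complex.exp (x * Complex.I)‖ := by
  have h := Real.mul_le_sin (x := x / 2) (by linarith) (by linarith)
  rw [norm_one_sub_cexp]
  linarith [le_abs_self (Real.sin (x / 2))]

lemma intervalIntegrable_circleWeight_aux : IntervalIntegrable circleWeight volume (-π) π := by
  have h0 : IntervalIntegrable (fun x : ℝ => x ^ (-(3 / 4) : ℝ)) volume 0 π :=
    intervalIntegral.intervalIntegrable_rpow' (by norm_num)
  have key : ∀ x : ℝ, x ∈ Set.uIoc 0 π →
      circleWeight x ≤ (2 / π) ^ (-(3 / 4) : ℝ) * x ^ (-(3 / 4) : ℝ) := by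
    intro x hx
    rw [uIoc_of_le pi_pos.le] at hx
    have hp := pi_pos
    rw [← Real.mul_rpow (by positivity) hx.1.le]
    refine Real.rpow_le_rpow_of_nonpos (mul_pos (by positivity) hx.1) ?_ (by norm_num)
    exact mul_le_norm_one_sub_cexp hx.1.le hx.2
  have h1 : IntervalIntegrable circleWeight volume 0 π := by
    refine (h0.const_mul ((2 / π) ^ (-(3 / 4) : ℝ))).mono_fun'
      measurable_circleWeight.aestronglyMeasurable ?_
    refine (ae_restrict_iff' measurableSet_uIoc).2 (.of_forall fun x hx => ?_)
    simpa only [Real.norm_of_nonneg (circleWeight_nonneg x)] using key x hx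
  have h2 : IntervalIntegrable circleWeight volume (-π) 0 := by
    have := (h1.comp_sub_left 0).symm
    simp only [zero_sub, sub_self] at this
    refine this.congr fun x _ => ?_
    simp only [circleWeight]
    congr 1
    rw [← Complex.norm_conj, map_sub, ← Complex.exp_conj]
    simp
  exact h2.trans h1

lemma intervalIntegrable_circleWeight (a b : ℝ) : IntervalIntegrable circleWeight volume a b := by
  refine circleWeight_periodic.intervalIntegrable (by have := pi_pos; positivity) (t := -π) ?_ a b
  convert intervalIntegrable_circleWeight_aux using 1
  ring

/-- The integral of `circleWeight` over a period. -/
noncomputable def circleMass : ℝ := ∫ x in (-π)..π, circleWeight x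

lemma integral_circleWeight_add (θ : ℝ) :
    ∫ x in (-π)..π, circleWeight (θ + x) = circleMass := by
  rw [intervalIntegral.integral_comp_add_left, circleMass]
  have := circleWeight_periodic.intervalIntegral_add_eq (θ + -π) (-π)
  convert this using 2 <;> ring

lemma integral_circleWeight_sub (θ : ℝ) :
    ∫ x in (-π)..π, circleWeight (θ - x) = circleMass := by
  rw [intervalIntegral.integral_comp_sub_left, circleMass]
  have := circleWeight_periodic.intervalIntegral_add_eq (θ - π) (-π)
  convert this using 2 <;> ring

lemma countable_cexp_eq_one : {x : ℝ | Complex.exp (x * Complex.I) = 1}.Countable := by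
  refine (countable_range (fun n : ℤ => (n : ℝ) * (2 * π))).mono ?_
  intro x hx
  obtain ⟨n, hn⟩ := Complex.exp_eq_one_iff.1 hx
  refine ⟨n, ?_⟩
  have : (x : ℂ) = ((n * (2 * π) : ℝ) : ℂ) := by
    apply mul_right_cancel₀ Complex.I_ne_zero
    rw [hn]; push_cast; ring
  exact (Complex.ofReal_injective this).symm

lemma ae_cexp_ne_one {f : ℝ → ℝ} (hf : Function.Injective f) :
    ∀ᵐ x : ℝ, Complex.exp (f x * Complex.I) ≠ 1 := by
  have := (countable_cexp_eq_one.preimage_of_injOn (f := f) hf.injOn).ae_notMem volume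
  filter_upwards [this] with x hx
  exact hx

lemma norm_one_sub_smul_rpow_le {x ρ : ℝ} (h0 : 0 ≤ ρ) (h1 : ρ ≤ 1)
    (hx : Complex.exp (x * Complex.I) ≠ 1) :
    ‖1 - ρ * Complex.exp (x * Complex.I)‖ ^ (-(3 / 4) : ℝ) ≤ 2 * circleWeight x := by
  have hpos : 0 < ‖1 - Complex.exp (x * Complex.I)‖ := by
    rw [norm_pos_iff, sub_ne_zero]; exact hx.symm
  have h := norm_one_sub_le_two_mul (norm_cexp_I x) h0 h1
  calc ‖1 - ρ * Complex.exp (x * Complex.I)‖ ^ (-(3 / 4) : ℝ)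
      ≤ ((1 / 2) * ‖1 - Complex.exp (x * Complex.I)‖) ^ (-(3 / 4) : ℝ) :=
        Real.rpow_le_rpow_of_nonpos (by positivity) (by linarith) (by norm_num)
    _ = (1 / 2 : ℝ) ^ (-(3 / 4) : ℝ) * circleWeight x := by
        rw [Real.mul_rpow (by norm_num) (norm_nonneg _), circleWeight]
    _ ≤ 2 * circleWeight x := by
        refine mul_le_mul_of_nonneg_right ?_ (circleWeight_nonneg x)
        rw [one_div, Real.inv_rpow (by norm_num), ← Real.rpow_neg (by norm_num), neg_neg]
        calc (2 : ℝ) ^ (3 / 4 : ℝ) ≤ 2 ^ (1 : ℝ) :=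
              Real.rpow_le_rpow_of_exponent_le (by norm_num) (by norm_num)
          _ = 2 := Real.rpow_one 2

lemma polar_mul_cexp (ρ θ x : ℝ) :
    ρ * Complex.exp (θ * Complex.I) * Complex.exp (x * Complex.I) =
      ρ * Complex.exp ((θ + x : ℝ) * Complex.I) := by
  rw [mul_assoc, ← Complex.exp_add]; push_cast; ring_nf

lemma polar_mul_cexp_neg (ρ θ x : ℝ) :
    ρ * Complex.exp (θ * Complex.I) * Complex.exp (-(x * Complex.I)) =
      ρ * Complex.exp ((θ - x : ℝ) * Complex.I) := by
  rw [mul_assoc, ← Complex.exp_add]; push_cast; ring_nf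

lemma norm_invSqrt_mul_invSqrt_le {ρ θ x s : ℝ} (h0 : 0 ≤ ρ) (h1 : ρ ≤ 1) (hs : 0 < s)
    (hsle : s ≤ ‖1 - (ρ * Complex.exp (θ * Complex.I)) ^ 2‖)
    (hp : Complex.exp ((θ + x : ℝ) * Complex.I) ≠ 1)
    (hm : Complex.exp ((θ - x : ℝ) * Complex.I) ≠ 1) :
    ‖invSqrt (ρ * Complex.exp (θ * Complex.I) * Complex.exp (x * Complex.I)) *
      invSqrt (ρ * Complex.exp (θ * Complex.I) * Complex.exp (-(x * Complex.I)))‖ ≤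
      (s / 2) ^ (-(1 / 4) : ℝ) * (2 * circleWeight (θ + x) + 2 * circleWeight (θ - x)) := by
  rw [polar_mul_cexp, polar_mul_cexp_neg, norm_mul, norm_invSqrt, norm_invSqrt]
  set u := (ρ : ℂ) * Complex.exp ((θ + x : ℝ) * Complex.I) with hu
  set v := (ρ : ℂ) * Complex.exp ((θ - x : ℝ) * Complex.I) with hv
  have huv : (ρ * Complex.exp (θ * Complex.I)) ^ 2 = u * v := by
    rw [hu, hv, ← polar_mul_cexp, ← polar_mul_cexp_neg, Complex.exp_neg]
    have := Complex.exp_ne_zero (x * Complex.I)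
    field_simp
  have hnu : ‖u‖ ≤ 1 := by
    rw [hu, norm_mul_cexp, Complex.norm_real, Real.norm_of_nonneg h0]; exact h1
  have hle : s ≤ ‖1 - u‖ + ‖1 - v‖ := by
    rw [huv] at hsle
    refine hsle.trans ?_
    rw [show 1 - u * v = (1 - u) + u * (1 - v) by ring]
    refine (norm_add_le _ _).trans ?_
    rw [norm_mul]
    gcongr
    exact mul_le_of_le_one_left (norm_nonneg _) hnu
  refine (rpow_neg_half_mul_le (norm_nonneg _) (norm_nonneg _) hs hle).trans ?_
  gcongr
  · exact norm_one_sub_smul_rpow_le h0 h1 hp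
  · exact norm_one_sub_smul_rpow_le h0 h1 hm

lemma integral_circleWeight_bound (c θ : ℝ) :
    IntervalIntegrable (fun x => c * (2 * circleWeight (θ + x) + 2 * circleWeight (θ - x)))
      volume (-π) π ∧
    ∫ x in (-π)..π, c * (2 * circleWeight (θ + x) + 2 * circleWeight (θ - x)) =
      c * (4 * circleMass) := by
  have hp : IntervalIntegrable (fun x => 2 * circleWeight (θ + x)) volume (-π) π := by
    have := (intervalIntegrable_circleWeight (θ + -π) (θ + π)).comp_add_left θ
    simp only [add_sub_cancel_left] at this
    exact this.const_mul 2
  have hm : IntervalIntegrable (fun x => 2 * circleWeight (θ - x)) volume (-π) π := by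
    have := (intervalIntegrable_circleWeight (θ + π) (θ - π)).comp_sub_left θ
    simp only [sub_sub_cancel, sub_add_cancel_left] at this
    exact this.const_mul 2
  refine ⟨(hp.add hm).const_mul c, ?_⟩
  rw [intervalIntegral.integral_const_mul, intervalIntegral.integral_add hp hm,
    intervalIntegral.integral_const_mul, intervalIntegral.integral_const_mul,
    integral_circleWeight_add, integral_circleWeight_sub]
  ring

lemma ae_cexp_add_sub_ne_one (θ : ℝ) : ∀ᵐ x : ℝ,
    Complex.exp ((θ + x : ℝ) * Complex.I) ≠ 1 ∧ Complex.exp ((θ - x : ℝ) * Complex.I) ≠ 1 :=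
  (ae_cexp_ne_one (add_right_injective θ)).and (ae_cexp_ne_one sub_right_injective)

lemma circleMass_nonneg : 0 ≤ circleMass :=
  intervalIntegral.integral_nonneg (by linarith [pi_pos]) fun x _ => circleWeight_nonneg x

lemma exists_polar (z : ℂ) : ∃ ρ θ : ℝ, 0 ≤ ρ ∧ ρ ^ 2 = ‖z‖ ∧
    (ρ * Complex.exp (θ * Complex.I)) ^ 2 = z := by
  refine ⟨√‖z‖, z.arg / 2, Real.sqrt_nonneg _, Real.sq_sqrt (norm_nonneg z), ?_⟩
  rw [mul_pow, ← Complex.ofReal_pow, Real.sq_sqrt (norm_nonneg z), ← Complex.exp_nat_mul]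
  conv_rhs => rw [← Complex.norm_mul_exp_arg_mul_I z]
  congr 2
  push_cast
  ring

lemma exists_norm_ellE_le : ∃ C : ℝ, 0 ≤ C ∧ ∀ z : ℂ, ‖z‖ < 1 →
    ‖ellE z‖ ≤ C * ‖1 - z‖ ^ (-(1 / 4) : ℝ) := by
  have hpi := pi_pos
  refine ⟨(1 / 2) ^ (-(1 / 4) : ℝ) * (4 * circleMass) / (2 * π),
    by have := circleMass_nonneg; positivity, fun z hz => ?_⟩
  obtain ⟨ρ, θ, h0, hρ, hk⟩ := exists_polar z
  have h1 : ρ < 1 := by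
    rw [← hρ] at hz
    nlinarith
  have hpos : 0 < ‖1 - z‖ := by
    rw [norm_pos_iff, sub_ne_zero]
    rintro rfl
    simp at hz
  have hE := integral_invSqrt_mul_invSqrt (k := ρ * Complex.exp (θ * Complex.I))
    (by rwa [norm_mul_cexp, Complex.norm_real, Real.norm_of_nonneg h0])
  obtain ⟨hi, hv⟩ := integral_circleWeight_bound ((‖1 - z‖ / 2) ^ (-(1 / 4) : ℝ)) θ
  have := intervalIntegral.norm_integral_le_of_norm_le (by linarith : -π ≤ π)
    ((ae_cexp_add_sub_ne_one θ).mono fun x hx _ =>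
      norm_invSqrt_mul_invSqrt_le (x := x) h0 h1.le hpos (by rw [hk]) hx.1 hx.2) hi
  rw [hv, hE, hk, norm_mul] at this
  have h2 : ‖(2 * π : ℂ)‖ = 2 * π := by
    rw [norm_mul, Complex.norm_real, Real.norm_of_nonneg hpi.le]; simp
  rw [h2, show ‖1 - z‖ / 2 = 1 / 2 * ‖1 - z‖ by ring,
    Real.mul_rpow (by norm_num) hpos.le] at this
  rw [div_mul_eq_mul_div, le_div_iff₀ (by positivity)]
  linarith

/-- The boundary value of `ellE` at `e^{2iθ}`. -/
noncomputable def ellEBoundary (θ : ℝ) : ℂ := (2 * π : ℂ)⁻¹ * ∫ x in (-π)..π,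
  invSqrt (Complex.exp ((θ + x : ℝ) * Complex.I)) * invSqrt (Complex.exp ((θ - x : ℝ) * Complex.I))

lemma measurable_invSqrt : Measurable invSqrt := by
  unfold invSqrt
  fun_prop

lemma one_sub_mem_slitPlane {z : ℂ} (hz : ‖z‖ ≤ 1) (h1 : z ≠ 1) : 1 - z ∈ Complex.slitPlane := by
  rw [Complex.mem_slitPlane_iff]
  by_contra! h
  simp only [Complex.sub_re, Complex.one_re, Complex.sub_im, Complex.one_im, zero_sub,
    neg_eq_zero] at h
  have h2 := (Complex.re_le_norm z).trans hz
  exact h1 (Complex.ext (by simp; linarith [h.1]) (by simp [h.2]))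

lemma continuousAt_invSqrt {z : ℂ} (hz : ‖z‖ ≤ 1) (h1 : z ≠ 1) : ContinuousAt invSqrt z := by
  unfold invSqrt
  exact (continuousAt_const.sub continuousAt_id).cpow continuousAt_const
    (one_sub_mem_slitPlane hz h1)

lemma tendsto_invSqrt_polar {x : ℝ} (hx : Complex.exp (x * Complex.I) ≠ 1) :
    Tendsto (fun ρ : ℝ => invSqrt (ρ * Complex.exp (x * Complex.I))) (𝓝[<] 1)
      (𝓝 (invSqrt (Complex.exp (x * Complex.I)))) := by
  have h := continuousAt_invSqrt (norm_cexp_I x).le hx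
  refine h.tendsto.comp ?_
  have : Continuous (fun ρ : ℝ => (ρ : ℂ) * Complex.exp (x * Complex.I)) := by fun_prop
  have h2 := (this.tendsto 1).mono_left (nhdsWithin_le_nhds (s := Iio 1))
  simpa using h2

lemma eventually_Ioo_nhdsLT_one : ∀ᶠ ρ : ℝ in 𝓝[<] 1, ρ ∈ Ioo (0 : ℝ) 1 :=
  Ioo_mem_nhdsLT one_pos

lemma cexp_sq_eq (θ : ℝ) : Complex.exp (θ * Complex.I) ^ 2 =
    Complex.exp ((2 * θ : ℝ) * Complex.I) := by
  rw [← Complex.exp_nat_mul]; push_cast; ring_nf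

lemma tendsto_ellE_polar {θ : ℝ} (hθ : Complex.exp (θ * Complex.I) ^ 2 ≠ 1) :
    Tendsto (fun ρ : ℝ => ellE ((ρ * Complex.exp (θ * Complex.I)) ^ 2)) (𝓝[<] 1)
      (𝓝 (ellEBoundary θ)) := by
  have hpi := pi_pos
  have hpos : 0 < ‖1 - Complex.exp (θ * Complex.I) ^ 2‖ := by
    rw [norm_pos_iff, sub_ne_zero]; exact hθ.symm
  set s := ‖1 - Complex.exp (θ * Complex.I) ^ 2‖ / 2 with hs
  have hlim := intervalIntegral.tendsto_integral_filter_of_dominated_convergence (μ := volume)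
    (a := -π) (b := π) (l := 𝓝[<] (1 : ℝ))
    (F := fun (ρ : ℝ) (x : ℝ) =>
      invSqrt (ρ * Complex.exp (θ * Complex.I) * Complex.exp (x * Complex.I)) *
      invSqrt (ρ * Complex.exp (θ * Complex.I) * Complex.exp (-(x * Complex.I))))
    (f := fun x => invSqrt (Complex.exp ((θ + x : ℝ) * Complex.I)) *
      invSqrt (Complex.exp ((θ - x : ℝ) * Complex.I)))
    (fun x => (s / 2) ^ (-(1 / 4) : ℝ) * (2 * circleWeight (θ + x) + 2 * circleWeight (θ - x)))
    (.of_forall fun ρ => by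
      have h1 : Measurable fun x : ℝ =>
          invSqrt (ρ * Complex.exp (θ * Complex.I) * Complex.exp (x * Complex.I)) :=
        measurable_invSqrt.comp (by fun_prop)
      have h2 : Measurable fun x : ℝ =>
          invSqrt (ρ * Complex.exp (θ * Complex.I) * Complex.exp (-(x * Complex.I))) :=
        measurable_invSqrt.comp (by fun_prop)
      exact (h1.mul h2).aestronglyMeasurable)
    (by
      filter_upwards [eventually_Ioo_nhdsLT_one] with ρ hρ
      filter_upwards [ae_cexp_add_sub_ne_one θ] with x hx _
      refine norm_invSqrt_mul_invSqrt_le hρ.1.le hρ.2.le (by positivity) ?_ hx.1 hx.2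
      have hn : ‖Complex.exp (θ * Complex.I) ^ 2‖ = 1 := by rw [norm_pow, norm_cexp_I, one_pow]
      have := norm_one_sub_le_two_mul hn (sq_nonneg ρ) (pow_le_one₀ hρ.1.le hρ.2.le)
      rw [mul_pow, ← Complex.ofReal_pow, hs]
      linarith)
    (integral_circleWeight_bound _ θ).1
    (by
      filter_upwards [ae_cexp_add_sub_ne_one θ] with x hx _
      simp_rw [polar_mul_cexp, polar_mul_cexp_neg]
      exact (tendsto_invSqrt_polar hx.1).mul (tendsto_invSqrt_polar hx.2))
  refine (hlim.const_mul (2 * π : ℂ)⁻¹).congr' ?_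
  filter_upwards [eventually_Ioo_nhdsLT_one] with ρ hρ
  rw [integral_invSqrt_mul_invSqrt
    (by rw [norm_mul_cexp, Complex.norm_real, Real.norm_of_nonneg hρ.1.le]; exact hρ.2)]
  have : (π : ℂ) ≠ 0 := by exact_mod_cast hpi.ne'
  field_simp

/-- The generating function `(1 - z)^(-1/2) ₂F₁(1/2, 1/2; 1; z)`. -/
noncomputable def genFun (z : ℂ) : ℂ := invSqrt z * ellE z

/-- The coefficients of `genFun`, indexed by the pairs of exponents contributing to them. -/
noncomputable def genCoeff (p : ℕ × ℕ) : ℂ := (halfCoeff p.1 : ℂ) * (halfCoeff p.2 : ℂ) ^ 2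

lemma norm_genCoeff_le (p : ℕ × ℕ) : ‖genCoeff p‖ ≤ 1 := by
  rw [genCoeff, norm_mul]
  exact mul_le_one₀ (norm_halfCoeff_le _) (norm_nonneg _) (norm_halfCoeff_sq_le _)

lemma hasSum_genFun {z : ℂ} (hz : ‖z‖ < 1) :
    HasSum (fun p : ℕ × ℕ => genCoeff p * z ^ (p.1 + p.2)) (genFun z) := by
  have hs := summable_mul_of_summable_norm
    (summable_norm_coeff_mul_pow norm_halfCoeff_le hz)
    (summable_norm_coeff_mul_pow norm_halfCoeff_sq_le hz)
  have hm := (hasSum_invSqrt hz).mul (hasSum_ellE hz) hs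
  refine hm.congr_fun fun p => ?_
  rw [genCoeff, pow_add]
  ring

lemma summable_pow_add {x : ℝ} (h0 : 0 ≤ x) (h1 : x < 1) :
    Summable (fun p : ℕ × ℕ => x ^ (p.1 + p.2)) := by
  have := summable_geometric_of_lt_one h0 h1
  simp_rw [pow_add]
  exact this.mul_of_nonneg this (fun n => by positivity) (fun n => by positivity)

lemma norm_genCoeff_mul_pow_le (p : ℕ × ℕ) (z : ℂ) :
    ‖genCoeff p * z ^ (p.1 + p.2)‖ ≤ ‖z‖ ^ (p.1 + p.2) := by
  rw [norm_mul, norm_pow]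
  exact mul_le_of_le_one_left (by positivity) (norm_genCoeff_le p)

lemma hasSum_radial {r ρ : ℝ} (hr : 0 < r) (h0 : 0 ≤ ρ) (h1 : ρ < 1) :
    HasSum (fun p : ℕ × ℕ => genCoeff p * (ρ : ℂ) ^ (p.1 + p.2) / ((p.1 + p.2 : ℕ) + r : ℂ))
      (∫ t in (0 : ℝ)..1, ((t ^ (r - 1) : ℝ) : ℂ) * genFun (ρ * t)) := by
  have hnorm : ∀ t : ℝ, t ∈ Set.uIoc (0 : ℝ) 1 → ‖(ρ * t : ℂ)‖ ≤ ρ := by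
    intro t ht
    rw [uIoc_of_le zero_le_one] at ht
    rw [norm_mul, Complex.norm_real, Complex.norm_real, Real.norm_of_nonneg h0,
      Real.norm_of_nonneg ht.1.le]
    exact mul_le_of_le_one_right h0 ht.2
  have hi := intervalIntegral.hasSum_integral_of_dominated_convergence (μ := volume)
    (a := 0) (b := 1)
    (F := fun (p : ℕ × ℕ) (t : ℝ) =>
      ((t ^ (r - 1) : ℝ) : ℂ) * (genCoeff p * (ρ * t : ℂ) ^ (p.1 + p.2)))
    (fun p t => t ^ (r - 1) * ρ ^ (p.1 + p.2))
    (fun p => by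
      refine Measurable.aestronglyMeasurable ?_
      fun_prop)
    (fun p => by
      refine .of_forall fun t ht => ?_
      have hn := hnorm t ht
      rw [uIoc_of_le zero_le_one] at ht
      have h2 : 0 ≤ t ^ (r - 1) := Real.rpow_nonneg ht.1.le _
      rw [norm_mul, Complex.norm_real, Real.norm_of_nonneg h2]
      refine mul_le_mul_of_nonneg_left ((norm_genCoeff_mul_pow_le p _).trans ?_) h2
      exact pow_le_pow_left₀ (norm_nonneg _) hn _)
    (.of_forall fun t _ => (summable_pow_add h0 h1).mul_left _)
    (by
      simp_rw [tsum_mul_left]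
      exact (intervalIntegral.intervalIntegrable_rpow' (by linarith)).mul_const _)
    (.of_forall fun t ht => (hasSum_genFun ((hnorm t ht).trans_lt h1)).mul_left _)
  refine hi.congr_fun fun p => ?_
  have hv : ∫ t in (0 : ℝ)..1, t ^ (r - 1 + (p.1 + p.2 : ℕ)) = 1 / ((p.1 + p.2 : ℕ) + r) := by
    have hpos : (0 : ℝ) ≤ (p.1 + p.2 : ℕ) := Nat.cast_nonneg _
    rw [integral_rpow (Or.inl (by linarith)), Real.one_rpow, Real.zero_rpow (by linarith)]
    congr 1
    · ring
    · ring
  have hc : ∫ t in (0 : ℝ)..1, ((t ^ (r - 1) : ℝ) : ℂ) * (genCoeff p * (ρ * t : ℂ) ^ (p.1 + p.2)) =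
      ∫ t in (0 : ℝ)..1, (genCoeff p * (ρ : ℂ) ^ (p.1 + p.2)) *
        ((t ^ (r - 1 + (p.1 + p.2 : ℕ)) : ℝ) : ℂ) := by
    refine intervalIntegral.integral_congr_ae (.of_forall fun t ht => ?_)
    rw [uIoc_of_le zero_le_one] at ht
    rw [Real.rpow_add ht.1, Real.rpow_natCast, mul_pow]
    push_cast
    ring
  rw [hc, intervalIntegral.integral_const_mul, intervalIntegral.integral_ofReal, hv]
  push_cast
  ring

lemma hasSum_circular {r ρ : ℝ} (hr : 0 < r) (h0 : 0 ≤ ρ) (h1 : ρ < 1) :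
    HasSum (fun p : ℕ × ℕ => (Complex.exp (2 * π * r * Complex.I) - 1) / Complex.I *
        (genCoeff p * (ρ : ℂ) ^ (p.1 + p.2) / ((p.1 + p.2 : ℕ) + r : ℂ)))
      (∫ α in (0 : ℝ)..(2 * π), Complex.exp (r * α * Complex.I) *
        genFun (ρ * Complex.exp (α * Complex.I))) := by
  have hnorm : ∀ α : ℝ, ‖(ρ * Complex.exp (α * Complex.I) : ℂ)‖ = ρ := by
    intro α
    rw [norm_mul_cexp, Complex.norm_real, Real.norm_of_nonneg h0]
  have hi := intervalIntegral.hasSum_integral_of_dominated_convergence (μ := volume)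
    (a := 0) (b := 2 * π)
    (F := fun (p : ℕ × ℕ) (α : ℝ) => Complex.exp (r * α * Complex.I) *
        (genCoeff p * (ρ * Complex.exp (α * Complex.I)) ^ (p.1 + p.2)))
    (fun p _ => ρ ^ (p.1 + p.2))
    (fun p => by
      refine Measurable.aestronglyMeasurable ?_
      fun_prop)
    (fun p => by
      refine .of_forall fun α _ => ?_
      rw [norm_mul, ← Complex.ofReal_mul, norm_cexp_I, one_mul]
      refine (norm_genCoeff_mul_pow_le p _).trans ?_
      rw [hnorm])
    (.of_forall fun t _ => summable_pow_add h0 h1)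
    (by simp)
    (.of_forall fun α _ => (hasSum_genFun ((hnorm α).trans_lt h1)).mul_left _)
  refine hi.congr_fun fun p => ?_
  have hpos : (0 : ℝ) < (p.1 + p.2 : ℕ) + r := by positivity
  have hne : (((p.1 + p.2 : ℕ) : ℂ) + r) ≠ 0 := by exact_mod_cast hpos.ne'
  have hc : ∀ α : ℝ, Complex.exp (r * α * Complex.I) *
        (genCoeff p * (ρ * Complex.exp (α * Complex.I)) ^ (p.1 + p.2)) =
      (genCoeff p * (ρ : ℂ) ^ (p.1 + p.2)) *
        Complex.exp ((((p.1 + p.2 : ℕ) : ℂ) + r) * Complex.I * α) := by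
    intro α
    rw [mul_pow, ← Complex.exp_nat_mul, add_mul, add_mul, Complex.exp_add]
    rw [show ((p.1 + p.2 : ℕ) : ℂ) * (α * Complex.I) =
      ((p.1 + p.2 : ℕ) : ℂ) * Complex.I * α by ring,
      show (r : ℂ) * α * Complex.I = r * Complex.I * α by ring]
    ring
  simp_rw [hc]
  rw [intervalIntegral.integral_const_mul,
    integral_exp_mul_complex (mul_ne_zero hne Complex.I_ne_zero)]
  have he : Complex.exp ((((p.1 + p.2 : ℕ) : ℂ) + r) * Complex.I * ((2 * π : ℝ) : ℂ)) =
      Complex.exp (2 * π * r * Complex.I) := by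
    rw [Complex.exp_eq_exp_iff_exists_int]
    exact ⟨(p.1 + p.2 : ℕ), by push_cast; ring⟩
  rw [he]
  simp only [Complex.ofReal_zero, mul_zero, Complex.exp_zero]
  field_simp [Complex.I_ne_zero]

lemma circular_eq_radial {r ρ : ℝ} (hr : 0 < r) (h0 : 0 ≤ ρ) (h1 : ρ < 1) :
    (∫ α in (0 : ℝ)..(2 * π), Complex.exp (r * α * Complex.I) *
        genFun (ρ * Complex.exp (α * Complex.I))) =
      (Complex.exp (2 * π * r * Complex.I) - 1) / Complex.I *
        ∫ t in (0 : ℝ)..1, ((t ^ (r - 1) : ℝ) : ℂ) * genFun (ρ * t) :=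
  (hasSum_circular hr h0 h1).unique ((hasSum_radial hr h0 h1).mul_left _)

lemma exists_norm_genFun_le : ∃ C : ℝ, 0 ≤ C ∧ ∀ z : ℂ, ‖z‖ < 1 →
    ‖genFun z‖ ≤ C * ‖1 - z‖ ^ (-(3 / 4) : ℝ) := by
  obtain ⟨C, hC, h⟩ := exists_norm_ellE_le
  refine ⟨C, hC, fun z hz => ?_⟩
  have hpos : 0 < ‖1 - z‖ := by
    rw [norm_pos_iff, sub_ne_zero]
    rintro rfl
    simp at hz
  rw [genFun, norm_mul, norm_invSqrt]
  calc ‖1 - z‖ ^ (-(1 / 2) : ℝ) * ‖ellE z‖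
      ≤ ‖1 - z‖ ^ (-(1 / 2) : ℝ) * (C * ‖1 - z‖ ^ (-(1 / 4) : ℝ)) := by gcongr; exact h z hz
    _ = C * (‖1 - z‖ ^ (-(1 / 2) : ℝ) * ‖1 - z‖ ^ (-(1 / 4) : ℝ)) := by ring
    _ = C * ‖1 - z‖ ^ (-(3 / 4) : ℝ) := by rw [← Real.rpow_add hpos]; norm_num

lemma continuousAt_ellE {z : ℂ} (hz : ‖z‖ < 1) : ContinuousAt ellE z := by
  obtain ⟨R, hR, hR1⟩ := exists_between hz
  have hc : ContinuousOn ellE (Metric.ball 0 R) := by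
    refine continuousOn_tsum (u := fun n => R ^ n) (fun n => by fun_prop)
      (summable_geometric_of_lt_one ((norm_nonneg z).trans hR.le) hR1) fun n w hw => ?_
    rw [mem_ball_zero_iff] at hw
    rw [norm_mul, norm_pow w]
    calc _ ≤ 1 * ‖w‖ ^ n := by gcongr; exact norm_halfCoeff_sq_le n
      _ ≤ R ^ n := by rw [one_mul]; gcongr
  exact hc.continuousAt (Metric.isOpen_ball.mem_nhds (by simpa using hR))

lemma continuousAt_genFun {z : ℂ} (hz : ‖z‖ < 1) : ContinuousAt genFun z :=
  (continuousAt_invSqrt hz.le (by rintro rfl; simp at hz)).mul (continuousAt_ellE hz)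

lemma intervalIntegrable_beta {r s : ℝ} (hr : 0 < r) (hs : 0 < s) :
    IntervalIntegrable (fun t : ℝ => t ^ (r - 1) * (1 - t) ^ (s - 1)) volume 0 1 := by
  have h := (Complex.betaIntegral_convergent (u := r) (v := s) (by simpa) (by simpa)).norm
  rw [intervalIntegrable_iff_integrableOn_Ioo_of_le zero_le_one] at h ⊢
  refine h.congr_fun (fun t ht => ?_) measurableSet_Ioo
  have h1 : (0 : ℝ) < 1 - t := by linarith [ht.2]
  simp only [norm_mul]
  rw [show (1 - t : ℂ) = ((1 - t : ℝ) : ℂ) by push_cast; ring,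
    Complex.norm_cpow_eq_rpow_re_of_pos ht.1,
    Complex.norm_cpow_eq_rpow_re_of_pos h1]
  simp

lemma tendsto_sq_nhdsLT_one : Tendsto (fun ρ : ℝ => ρ ^ 2) (𝓝[<] 1) (𝓝[<] 1) := by
  refine tendsto_nhdsWithin_iff.2 ⟨?_, ?_⟩
  · have : Continuous (fun ρ : ℝ => ρ ^ 2) := by fun_prop
    simpa using (this.tendsto 1).mono_left (nhdsWithin_le_nhds (s := Iio 1))
  · filter_upwards [eventually_Ioo_nhdsLT_one] with ρ hρ
    exact pow_lt_one₀ hρ.1.le hρ.2 two_ne_zero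

lemma ae_ne (a : ℝ) : ∀ᵐ x : ℝ, x ≠ a := by
  filter_upwards [(Set.countable_singleton a).ae_notMem volume] with x hx
  simpa using hx

lemma tendsto_radial {r : ℝ} (hr : 0 < r) :
    Tendsto (fun ρ : ℝ => ∫ t in (0 : ℝ)..1, ((t ^ (r - 1) : ℝ) : ℂ) * genFun (ρ * t)) (𝓝[<] 1)
      (𝓝 (∫ t in (0 : ℝ)..1, ((t ^ (r - 1) : ℝ) : ℂ) * genFun t)) := by
  obtain ⟨C, hC, h⟩ := exists_norm_genFun_le
  have hnorm : ∀ ρ t : ℝ, ρ ∈ Ioo (0 : ℝ) 1 → t ∈ Icc (0 : ℝ) 1 → ‖(ρ * t : ℂ)‖ < 1 := by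
    intro ρ t hρ ht
    rw [norm_mul, Complex.norm_real, Complex.norm_real, Real.norm_of_nonneg hρ.1.le,
      Real.norm_of_nonneg ht.1]
    exact (mul_le_of_le_one_right hρ.1.le ht.2).trans_lt hρ.2
  refine intervalIntegral.tendsto_integral_filter_of_dominated_convergence
    (fun t => C * (t ^ (r - 1) * (1 - t) ^ ((1 / 4 : ℝ) - 1))) ?_ ?_
    ((intervalIntegrable_beta hr (by norm_num)).const_mul C) ?_
  · filter_upwards [eventually_Ioo_nhdsLT_one] with ρ hρ
    have h1 : AEStronglyMeasurable (fun t : ℝ => ((t ^ (r - 1) : ℝ) : ℂ))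
        (volume.restrict (Set.uIoc 0 1)) := by
      refine Measurable.aestronglyMeasurable ?_
      fun_prop
    refine h1.mul (ContinuousOn.aestronglyMeasurable (fun t ht => ?_) measurableSet_uIoc)
    rw [uIoc_of_le zero_le_one] at ht
    have h2 := continuousAt_genFun (hnorm ρ t hρ ⟨ht.1.le, ht.2⟩)
    have h3 : ContinuousAt (fun t : ℝ => (ρ * t : ℂ)) t := by fun_prop
    exact (ContinuousAt.comp (f := fun t : ℝ => (ρ * t : ℂ)) h2 h3).continuousWithinAt
  · filter_upwards [eventually_Ioo_nhdsLT_one] with ρ hρ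
    filter_upwards [ae_ne 1] with t ht1 ht
    rw [uIoc_of_le zero_le_one] at ht
    have ht1 : 0 < 1 - t := by linarith [lt_of_le_of_ne ht.2 ht1]
    rw [norm_mul, Complex.norm_real, Real.norm_of_nonneg (Real.rpow_nonneg ht.1.le _)]
    have h2 := h _ (hnorm ρ t hρ ⟨ht.1.le, ht.2⟩)
    have h3 : ‖(1 - ρ * t : ℂ)‖ ^ (-(3 / 4) : ℝ) ≤ (1 - t) ^ ((1 / 4 : ℝ) - 1) := by
      rw [show (1 / 4 : ℝ) - 1 = -(3 / 4) by norm_num]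
      refine Real.rpow_le_rpow_of_nonpos ht1 ?_ (by norm_num)
      rw [show (1 - ρ * t : ℂ) = ((1 - ρ * t : ℝ) : ℂ) by push_cast; ring, Complex.norm_real]
      refine le_trans ?_ (le_abs_self _)
      nlinarith [hρ.2, ht.1]
    calc t ^ (r - 1) * ‖genFun (ρ * t)‖
        ≤ t ^ (r - 1) * (C * (1 - t) ^ ((1 / 4 : ℝ) - 1)) := by
          refine mul_le_mul_of_nonneg_left (h2.trans ?_) (Real.rpow_nonneg ht.1.le _)
          gcongr
      _ = _ := by ring
  · filter_upwards [ae_ne 1] with t ht1 ht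
    rw [uIoc_of_le zero_le_one] at ht
    refine Tendsto.const_mul _ ?_
    have h2 : ContinuousAt genFun (t : ℂ) := by
      refine continuousAt_genFun ?_
      rw [Complex.norm_real, Real.norm_of_nonneg ht.1.le]
      exact lt_of_le_of_ne ht.2 ht1
    refine h2.tendsto.comp ?_
    have : Continuous (fun ρ : ℝ => (ρ * t : ℂ)) := by fun_prop
    simpa using (this.tendsto 1).mono_left (nhdsWithin_le_nhds (s := Iio 1))

lemma norm_sq_mul_cexp_lt {ρ : ℝ} (α : ℝ) (hρ : ρ ∈ Ioo (0 : ℝ) 1) :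
    ‖((ρ ^ 2 : ℝ) * Complex.exp (α * Complex.I) : ℂ)‖ < 1 := by
  rw [norm_mul_cexp, Complex.norm_real, Real.norm_of_nonneg (sq_nonneg ρ)]
  exact pow_lt_one₀ hρ.1.le hρ.2 two_ne_zero

lemma continuous_circular (r : ℝ) {ρ : ℝ} (hρ : ρ ∈ Ioo (0 : ℝ) 1) :
    Continuous fun α : ℝ => Complex.exp (r * α * Complex.I) *
      genFun ((ρ ^ 2 : ℝ) * Complex.exp (α * Complex.I)) := by
  refine Continuous.mul (by fun_prop) (continuous_iff_continuousAt.2 fun α => ?_)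
  have h3 : ContinuousAt (fun α : ℝ => ((ρ ^ 2 : ℝ) * Complex.exp (α * Complex.I) : ℂ)) α := by
    fun_prop
  exact ContinuousAt.comp (f := fun α : ℝ => ((ρ ^ 2 : ℝ) * Complex.exp (α * Complex.I) : ℂ))
    (continuousAt_genFun (norm_sq_mul_cexp_lt α hρ)) h3

lemma exists_norm_circular_le : ∃ C : ℝ, ∀ r ρ α : ℝ, ρ ∈ Ioo (0 : ℝ) 1 →
    Complex.exp (α * Complex.I) ≠ 1 →
    ‖Complex.exp (r * α * Complex.I) *
      genFun ((ρ ^ 2 : ℝ) * Complex.exp (α * Complex.I))‖ ≤ C * (2 * circleWeight α) := by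
  obtain ⟨C, hC, h⟩ := exists_norm_genFun_le
  refine ⟨C, fun r ρ α hρ hα => ?_⟩
  rw [norm_mul, ← Complex.ofReal_mul, norm_cexp_I, one_mul]
  refine (h _ (norm_sq_mul_cexp_lt α hρ)).trans ?_
  gcongr
  exact norm_one_sub_smul_rpow_le (sq_nonneg ρ) (pow_le_one₀ hρ.1.le hρ.2.le) hα

lemma tendsto_circular_apply (r : ℝ) {α : ℝ} (hα : Complex.exp (α * Complex.I) ≠ 1) :
    Tendsto (fun ρ : ℝ => Complex.exp (r * α * Complex.I) *
        genFun ((ρ ^ 2 : ℝ) * Complex.exp (α * Complex.I))) (𝓝[<] 1)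
      (𝓝 (Complex.exp (r * α * Complex.I) *
        (invSqrt (Complex.exp (α * Complex.I)) * ellEBoundary (α / 2)))) := by
  refine Tendsto.const_mul _ (Tendsto.mul ?_ ?_)
  · exact (tendsto_invSqrt_polar hα).comp tendsto_sq_nhdsLT_one
  · have hc : Complex.exp ((α / 2 : ℝ) * Complex.I) ^ 2 = Complex.exp (α * Complex.I) := by
      rw [cexp_sq_eq]; ring_nf
    have := tendsto_ellE_polar (θ := α / 2) (by rwa [hc])
    simp_rw [mul_pow, hc] at this
    simpa using this

lemma tendsto_circular (r : ℝ) :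
    Tendsto (fun ρ : ℝ => ∫ α in (0 : ℝ)..(2 * π), Complex.exp (r * α * Complex.I) *
        genFun ((ρ ^ 2 : ℝ) * Complex.exp (α * Complex.I))) (𝓝[<] 1)
      (𝓝 (∫ α in (0 : ℝ)..(2 * π), Complex.exp (r * α * Complex.I) *
        (invSqrt (Complex.exp (α * Complex.I)) * ellEBoundary (α / 2)))) := by
  obtain ⟨C, h⟩ := exists_norm_circular_le
  refine intervalIntegral.tendsto_integral_filter_of_dominated_convergence
    (fun α => C * (2 * circleWeight α)) ?_ ?_
    (((intervalIntegrable_circleWeight _ _).const_mul 2).const_mul C) ?_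
  · filter_upwards [eventually_Ioo_nhdsLT_one] with ρ hρ
    exact (continuous_circular r hρ).aestronglyMeasurable
  · filter_upwards [eventually_Ioo_nhdsLT_one] with ρ hρ
    filter_upwards [ae_cexp_ne_one (f := fun x => x) fun _ _ h => h] with α hα _
    exact h r ρ α hρ hα
  · filter_upwards [ae_cexp_ne_one (f := fun x => x) fun _ _ h => h] with α hα _
    exact tendsto_circular_apply r hα

/-- Contour shift for `∫ t^(r-1) genFun t dt` from the radius `[0, 1]` to the unit circle. -/
lemma radial_eq_boundary {r : ℝ} (hr : 0 < r) :
    (∫ α in (0 : ℝ)..(2 * π), Complex.exp (r * α * Complex.I) *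
        (invSqrt (Complex.exp (α * Complex.I)) * ellEBoundary (α / 2))) =
      (Complex.exp (2 * π * r * Complex.I) - 1) / Complex.I *
        ∫ t in (0 : ℝ)..1, ((t ^ (r - 1) : ℝ) : ℂ) * genFun t := by
  refine tendsto_nhds_unique (tendsto_circular r) ?_
  refine (((tendsto_radial hr).comp tendsto_sq_nhdsLT_one).const_mul _).congr' ?_
  filter_upwards [eventually_Ioo_nhdsLT_one] with ρ hρ
  exact (circular_eq_radial hr (sq_nonneg ρ) (pow_lt_one₀ hρ.1.le hρ.2 two_ne_zero)).symm

lemma intervalIntegrable_radial {r : ℝ} (hr : 0 < r) :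
    IntervalIntegrable (fun t : ℝ => ((t ^ (r - 1) : ℝ) : ℂ) * genFun t) volume 0 1 := by
  obtain ⟨C, hC, h⟩ := exists_norm_genFun_le
  have hb := (intervalIntegrable_beta hr (s := 1 / 4) (by norm_num)).const_mul C
  rw [intervalIntegrable_iff_integrableOn_Ioo_of_le zero_le_one] at hb ⊢
  have hn : ∀ t ∈ Ioo (0 : ℝ) 1, ‖(t : ℂ)‖ < 1 := fun t ht => by
    rw [Complex.norm_real, Real.norm_of_nonneg ht.1.le]; exact ht.2
  refine hb.mono' ?_ ((ae_restrict_iff' measurableSet_Ioo).2 (.of_forall fun t ht => ?_))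
  · have h1 : Measurable (fun t : ℝ => ((t ^ (r - 1) : ℝ) : ℂ)) := by fun_prop
    refine h1.aestronglyMeasurable.mul
      (ContinuousOn.aestronglyMeasurable (fun t ht => ?_) measurableSet_Ioo)
    exact (ContinuousAt.comp (f := fun t : ℝ => (t : ℂ)) (continuousAt_genFun (hn t ht))
      Complex.continuous_ofReal.continuousAt).continuousWithinAt
  · rw [norm_mul, Complex.norm_real, Real.norm_of_nonneg (Real.rpow_nonneg ht.1.le _)]
    have h2 := h _ (hn t ht)
    have h3 : ‖(1 - t : ℂ)‖ = 1 - t := by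
      rw [show (1 - t : ℂ) = ((1 - t : ℝ) : ℂ) by push_cast; ring, Complex.norm_real,
        Real.norm_of_nonneg (by linarith [ht.2])]
    rw [h3, show -(3 / 4 : ℝ) = 1 / 4 - 1 by norm_num] at h2
    calc t ^ (r - 1) * ‖genFun t‖ ≤ t ^ (r - 1) * (C * (1 - t) ^ ((1 / 4 : ℝ) - 1)) := by
          exact mul_le_mul_of_nonneg_left h2 (Real.rpow_nonneg ht.1.le _)
      _ = _ := by ring

lemma intervalIntegrable_boundary (r : ℝ) :
    IntervalIntegrable (fun α : ℝ => Complex.exp (r * α * Complex.I) *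
        (invSqrt (Complex.exp (α * Complex.I)) * ellEBoundary (α / 2))) volume 0 (2 * π) := by
  obtain ⟨C, h⟩ := exists_norm_circular_le
  obtain ⟨u, -, hu, hu1⟩ := exists_seq_strictMono_tendsto' (zero_lt_one' ℝ)
  have hu' : Tendsto u atTop (𝓝[<] 1) :=
    tendsto_nhdsWithin_iff.2 ⟨hu1, .of_forall fun n => (hu n).2⟩
  have hae := ae_cexp_ne_one (f := fun x => x) fun _ _ h => h
  have hb := ((intervalIntegrable_circleWeight 0 (2 * π)).const_mul 2).const_mul C
  refine hb.mono_fun' ?_ ?_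
  · refine aestronglyMeasurable_of_tendsto_ae atTop
      (fun n => (continuous_circular r (hu n)).aestronglyMeasurable)
      (ae_restrict_of_ae ?_)
    filter_upwards [hae] with α hα
    exact (tendsto_circular_apply r hα).comp hu'
  · refine ae_restrict_of_ae ?_
    filter_upwards [hae] with α hα
    refine le_of_tendsto (tendsto_circular_apply r hα).norm ?_
    filter_upwards [eventually_Ioo_nhdsLT_one] with ρ hρ using h r ρ α hρ hα

lemma invSqrt_cexp {β : ℝ} (h0 : 0 < β) (h1 : β < 2 * π) :
    invSqrt (Complex.exp (β * Complex.I)) =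
      ((2 * Real.sin (β / 2)) ^ (-(1 / 2) : ℝ) : ℝ) *
        Complex.exp (((π - β) / 4 : ℝ) * Complex.I) := by
  have hs : 0 < 2 * Real.sin (β / 2) :=
    mul_pos two_pos (Real.sin_pos_of_pos_of_lt_pi (by linarith) (by linarith))
  have hz : 1 - Complex.exp (β * Complex.I) =
      Complex.exp ((Real.log (2 * Real.sin (β / 2)) : ℝ) + ((β - π) / 2 : ℝ) * Complex.I) := by
    rw [Complex.exp_add, ← Complex.ofReal_exp, Real.exp_log hs]
    have e : β = 2 * (β / 2) := by ring
    apply Complex.ext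
    · rw [Complex.re_ofReal_mul, Complex.sub_re, Complex.exp_ofReal_mul_I_re,
        Complex.exp_ofReal_mul_I_re, sub_div, Real.cos_sub_pi_div_two, Complex.one_re]
      rw [show Real.cos β = Real.cos (2 * (β / 2)) by rw [← e], Real.cos_two_mul']
      nlinarith [Real.sin_sq_add_cos_sq (β / 2)]
    · rw [Complex.im_ofReal_mul, Complex.sub_im, Complex.exp_ofReal_mul_I_im,
        Complex.exp_ofReal_mul_I_im, sub_div, Real.sin_sub_pi_div_two, Complex.one_im]
      rw [show Real.sin β = Real.sin (2 * (β / 2)) by rw [← e], Real.sin_two_mul]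
      ring
  rw [invSqrt, hz, Complex.cpow_def_of_ne_zero (Complex.exp_ne_zero _), Complex.log_exp,
    Real.rpow_def_of_pos hs, Complex.ofReal_exp, ← Complex.exp_add]
  · congr 1
    push_cast
    ring
  · simp
    linarith [pi_pos]
  · simp
    linarith [pi_pos]

lemma invSqrt_cexp_of_neg {β : ℝ} (h0 : β < 0) (h1 : -(2 * π) < β) :
    invSqrt (Complex.exp (β * Complex.I)) =
      ((-(2 * Real.sin (β / 2))) ^ (-(1 / 2) : ℝ) : ℝ) *
        Complex.exp ((-(π + β) / 4 : ℝ) * Complex.I) := by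
  have h : Complex.exp (β * Complex.I) = Complex.exp ((β + 2 * π : ℝ) * Complex.I) := by
    push_cast
    rw [add_mul, Complex.exp_add, Complex.exp_two_pi_mul_I, mul_one]
  rw [h, invSqrt_cexp (by linarith) (by linarith),
    show (β + 2 * π) / 2 = β / 2 + π by ring, Real.sin_add_pi]
  congr 2
  · ring_nf
  · congr 2; ring

lemma four_sin_mul_sin (θ x : ℝ) : 2 * Real.sin ((θ + x) / 2) * (2 * Real.sin ((θ - x) / 2)) =
    2 * (Real.cos x - Real.cos θ) := by
  rw [Real.cos_sub_cos]
  rw [show (x - θ) / 2 = -((θ - x) / 2) by ring, Real.sin_neg, add_comm x θ]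
  ring

/-- The integrand of `ellEBoundary`. -/
noncomputable def boundaryKernel (θ x : ℝ) : ℂ :=
  invSqrt (Complex.exp ((θ + x : ℝ) * Complex.I)) * invSqrt (Complex.exp ((θ - x : ℝ) * Complex.I))

lemma boundaryKernel_neg (θ x : ℝ) : boundaryKernel θ (-x) = boundaryKernel θ x := by
  rw [boundaryKernel, boundaryKernel, mul_comm, sub_neg_eq_add, ← sub_eq_add_neg]

lemma cexp_mul_boundaryKernel_inner {θ x : ℝ} (hθ : θ ≤ π) (hx : |x| < θ) :
    Complex.exp ((θ / 2 : ℝ) * Complex.I) * boundaryKernel θ x =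
      ((2 * (Real.cos x - Real.cos θ)) ^ (-(1 / 2) : ℝ) : ℝ) * Complex.I := by
  obtain ⟨h1, h2⟩ := abs_lt.1 hx
  rw [boundaryKernel, invSqrt_cexp (by linarith) (by linarith),
    invSqrt_cexp (by linarith) (by linarith), ← four_sin_mul_sin,
    Real.mul_rpow (x := 2 * Real.sin ((θ + x) / 2))]
  · have : Complex.I = Complex.exp ((θ / 2 : ℝ) * Complex.I) *
        (Complex.exp (((π - (θ + x)) / 4 : ℝ) * Complex.I) *
        Complex.exp (((π - (θ - x)) / 4 : ℝ) * Complex.I)) := by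
      rw [← Complex.exp_add, ← Complex.exp_add]
      nth_rw 1 [← Complex.exp_pi_div_two_mul_I]
      congr 1
      push_cast
      ring
    nth_rw 4 [this]
    push_cast
    ring
  · have := Real.sin_nonneg_of_nonneg_of_le_pi (x := (θ + x) / 2) (by linarith) (by linarith)
    positivity
  · have := Real.sin_nonneg_of_nonneg_of_le_pi (x := (θ - x) / 2) (by linarith) (by linarith)
    positivity

lemma cexp_mul_boundaryKernel_outer_aux {θ x : ℝ} (h0 : 0 < θ) (h1 : θ < x)
    (h2 : x < π) : (Complex.exp ((θ / 2 : ℝ) * Complex.I) * boundaryKernel θ x).im = 0 := by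
  rw [boundaryKernel, invSqrt_cexp (by linarith) (by linarith),
    invSqrt_cexp_of_neg (by linarith) (by linarith)]
  have : Complex.exp ((θ / 2 : ℝ) * Complex.I) *
        (Complex.exp (((π - (θ + x)) / 4 : ℝ) * Complex.I) *
        Complex.exp ((-(π + (θ - x)) / 4 : ℝ) * Complex.I)) = 1 := by
    rw [← Complex.exp_add, ← Complex.exp_add, Complex.exp_eq_one_iff]
    exact ⟨0, by push_cast; ring⟩
  rw [show ∀ a b c d e : ℂ, a * (b * c * (d * e)) = b * d * (a * (c * e)) by intros; ring, this,
    mul_one, ← Complex.ofReal_mul, Complex.ofReal_im]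

lemma cexp_mul_boundaryKernel_outer {θ x : ℝ} (h0 : 0 < θ) (h1 : θ < |x|)
    (h2 : |x| < π) : (Complex.exp ((θ / 2 : ℝ) * Complex.I) * boundaryKernel θ x).im = 0 := by
  rcases abs_choice x with h | h <;> rw [h] at h1 h2
  · exact cexp_mul_boundaryKernel_outer_aux h0 h1 h2
  · rw [← boundaryKernel_neg]
    exact cexp_mul_boundaryKernel_outer_aux h0 h1 h2

lemma cexp_sq_ne_one {θ : ℝ} (h0 : 0 < θ) (hθ : θ < π) :
    Complex.exp (θ * Complex.I) ^ 2 ≠ 1 := by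
  rw [cexp_sq_eq, ← sub_ne_zero, ← norm_pos_iff, norm_sub_rev, norm_one_sub_cexp]
  rw [show 2 * θ / 2 = θ by ring]
  have := Real.sin_pos_of_pos_of_lt_pi h0 hθ
  positivity

lemma intervalIntegrable_boundaryKernel {θ : ℝ} (h0 : 0 < θ) (hθ : θ < π) :
    IntervalIntegrable (boundaryKernel θ) volume (-π) π := by
  have hs : 0 < ‖1 - Complex.exp (θ * Complex.I) ^ 2‖ := by
    rw [norm_pos_iff, sub_ne_zero]; exact (cexp_sq_ne_one h0 hθ).symm
  refine (integral_circleWeight_bound ((‖1 - Complex.exp (θ * Complex.I) ^ 2‖ / 2) ^ (-(1 / 4) : ℝ))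
    θ).1.mono_fun' ?_ (ae_restrict_of_ae ?_)
  · refine Measurable.aestronglyMeasurable ?_
    unfold boundaryKernel
    exact (measurable_invSqrt.comp (by fun_prop)).mul (measurable_invSqrt.comp (by fun_prop))
  · filter_upwards [ae_cexp_add_sub_ne_one θ] with x hx
    have := norm_invSqrt_mul_invSqrt_le (ρ := 1) zero_le_one le_rfl hs
      (by rw [Complex.ofReal_one, one_mul]) hx.1 hx.2
    rw [polar_mul_cexp, polar_mul_cexp_neg] at this
    simpa only [Complex.ofReal_one, one_mul, boundaryKernel] using this

lemma im_cexp_mul_ellEBoundary {θ : ℝ} (h0 : 0 < θ) (hθ : θ < π) :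
    (Complex.exp ((θ / 2 : ℝ) * Complex.I) * ellEBoundary θ).im =
      (2 * π)⁻¹ * ∫ x in (-θ)..θ, (2 * (Real.cos x - Real.cos θ)) ^ (-(1 / 2) : ℝ) := by
  have hi := (intervalIntegrable_boundaryKernel h0 hθ).const_mul
    (Complex.exp ((θ / 2 : ℝ) * Complex.I))
  have hpi := pi_pos
  have e1 : Complex.exp ((θ / 2 : ℝ) * Complex.I) * ellEBoundary θ = ((2 * π)⁻¹ : ℝ) *
      ∫ x in (-π)..π, Complex.exp ((θ / 2 : ℝ) * Complex.I) * boundaryKernel θ x := by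
    rw [intervalIntegral.integral_const_mul, ellEBoundary]
    simp only [boundaryKernel]
    push_cast
    ring
  rw [e1, Complex.im_ofReal_mul]
  congr 1
  rw [← Complex.imCLM_apply, ← Complex.imCLM.intervalIntegral_comp_comm hi]
  simp only [Complex.imCLM_apply]
  rw [intervalIntegral.integral_of_le (by linarith), intervalIntegral.integral_of_le (by linarith),
    integral_Ioc_eq_integral_Ioo, integral_Ioc_eq_integral_Ioo]
  rw [setIntegral_eq_of_subset_of_ae_sdiff_eq_zero (s := Ioo (-θ) θ)
    measurableSet_Ioo.nullMeasurableSet (Ioo_subset_Ioo (by linarith) hθ.le)]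
  · refine setIntegral_congr_fun measurableSet_Ioo fun x hx => ?_
    rw [cexp_mul_boundaryKernel_inner hθ.le (abs_lt.2 hx), Complex.im_ofReal_mul, Complex.I_im,
      mul_one]
  · filter_upwards [ae_ne θ, ae_ne (-θ)] with x h1 h2 hx
    refine cexp_mul_boundaryKernel_outer h0 (lt_of_le_of_ne ?_ ?_) (abs_lt.2 hx.1)
    · by_contra! h
      exact hx.2 (abs_lt.1 h)
    · rintro rfl
      rcases abs_choice x with h | h <;> rw [h] at h1 h2 <;> simp at h1 h2

lemma integral_landen {φ : ℝ} (h0 : 0 < φ) (h1 : φ < π / 2) :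
    ∫ x in (-(2 * φ))..(2 * φ), (2 * (Real.cos x - Real.cos (2 * φ))) ^ (-(1 / 2) : ℝ) =
      1 / 2 * ∫ x in (-π)..π, (1 - Real.sin φ ^ 2 * Real.sin (x / 2) ^ 2) ^ (-(1 / 2) : ℝ) := by
  have hpi := pi_pos
  have hsin : 0 < Real.sin φ := Real.sin_pos_of_pos_of_lt_pi h0 (by linarith)
  have hsin1 : Real.sin φ < 1 := by
    rw [← Real.sin_pi_div_two]
    exact Real.sin_lt_sin_of_lt_of_le_pi_div_two (by linarith) le_rfl h1
  have hlt : ∀ x : ℝ, |Real.sin φ * Real.sin (x / 2)| < 1 := fun x => by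
    rw [abs_mul, abs_of_pos hsin]
    exact (mul_le_of_le_one_right hsin.le (Real.abs_sin_le_one _)).trans_lt hsin1
  have hpos : ∀ x : ℝ, 0 < 1 - Real.sin φ ^ 2 * Real.sin (x / 2) ^ 2 := fun x => by
    have := hlt x
    rw [← sq_lt_one_iff_abs_lt_one] at this
    nlinarith
  have hder : ∀ x : ℝ, HasDerivAt (fun x => 2 * Real.arcsin (Real.sin φ * Real.sin (x / 2)))
      (Real.sin φ * Real.cos (x / 2) / √(1 - Real.sin φ ^ 2 * Real.sin (x / 2) ^ 2)) x :=
    fun x => by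
    have h2 : HasDerivAt (fun x : ℝ => Real.sin φ * Real.sin (x / 2))
        (Real.sin φ * (Real.cos (x / 2) * (1 / 2))) x :=
      (((hasDerivAt_id x).div_const 2).sin).const_mul _
    have h3 := ((Real.hasDerivAt_arcsin (abs_lt.1 (hlt x)).1.ne' (abs_lt.1 (hlt x)).2.ne).comp x
      h2).const_mul 2
    refine h3.congr_deriv ?_
    rw [mul_pow]
    ring
  have key := intervalIntegral.integral_comp_mul_deriv_of_deriv_nonneg
    (f := fun x => 2 * Real.arcsin (Real.sin φ * Real.sin (x / 2))) (a := -π) (b := π)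
    (g := fun x => (2 * (Real.cos x - Real.cos (2 * φ))) ^ (-(1 / 2) : ℝ))
    (fun x _ => (hder x).continuousAt.continuousWithinAt) (fun x _ => hder x)
    (fun x hx => by
      rw [min_eq_left (by linarith), max_eq_right (by linarith)] at hx
      have := Real.cos_nonneg_of_mem_Icc (x := x / 2)
        ⟨by linarith [hx.1], by linarith [hx.2]⟩
      positivity)
  have hb : Real.arcsin (Real.sin φ) = φ := Real.arcsin_sin (by linarith) h1.le
  simp only [neg_div, Real.sin_neg, Real.sin_pi_div_two, mul_one, mul_neg, Real.arcsin_neg,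
    hb] at key
  rw [← key, ← intervalIntegral.integral_const_mul]
  refine intervalIntegral.integral_congr_ae ?_
  filter_upwards [ae_ne π] with x hx1 hx
  rw [uIoc_of_le (by linarith)] at hx
  have hc : 0 < Real.cos (x / 2) := Real.cos_pos_of_mem_Ioo
    ⟨by linarith [hx.1], by linarith [lt_of_le_of_ne hx.2 hx1]⟩
  have hy := hlt x
  have e : 2 * (Real.cos (2 * Real.arcsin (Real.sin φ * Real.sin (x / 2))) - Real.cos (2 * φ)) =
      (2 * Real.sin φ * Real.cos (x / 2)) ^ 2 := by
    rw [Real.cos_two_mul', Real.cos_two_mul', Real.cos_sq', Real.cos_sq',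
      Real.sin_arcsin (abs_lt.1 hy).1.le (abs_lt.1 hy).2.le, mul_pow _ (Real.cos _), Real.cos_sq']
    ring
  rw [Function.comp_apply, e, Real.sqrt_eq_rpow, Real.rpow_neg (sq_nonneg _), ← Real.sqrt_eq_rpow,
    Real.sqrt_sq (by positivity), Real.rpow_neg (hpos x).le]
  have := Real.rpow_pos_of_pos (hpos x) (1 / 2)
  field_simp

lemma invSqrt_mul_invSqrt_conj {z : ℂ} (hz : ‖z‖ < 1) :
    invSqrt z * invSqrt (starRingEnd ℂ z) = ((‖1 - z‖ ^ 2) ^ (-(1 / 2) : ℝ) : ℝ) := by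
  have h1 : 1 - z ∈ Complex.slitPlane :=
    one_sub_mem_slitPlane hz.le (by rintro rfl; simp at hz)
  have h : invSqrt (starRingEnd ℂ z) = starRingEnd ℂ (invSqrt z) := by
    rw [invSqrt, invSqrt, ← map_one (starRingEnd ℂ), ← map_sub,
      Complex.conj_cpow _ _ (Complex.slitPlane_arg_ne_pi h1)]
    simp [map_ofNat]
  rw [h, Complex.mul_conj, Complex.normSq_eq_norm_sq, norm_invSqrt, ← Real.rpow_natCast,
    ← Real.rpow_natCast, ← Real.rpow_mul (norm_nonneg _), ← Real.rpow_mul (norm_nonneg _)]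
  norm_num

lemma two_pi_mul_ellE_sq {l : ℝ} (h0 : 0 ≤ l) (h1 : l < 1) :
    2 * π * ellE ((l : ℂ) ^ 2) =
      ((∫ x in (-π)..π, (1 + 2 * l * Real.cos x + l ^ 2) ^ (-(1 / 2) : ℝ) : ℝ) : ℂ) := by
  have hk : ‖(-l : ℂ)‖ < 1 := by
    rwa [norm_neg, Complex.norm_real, Real.norm_of_nonneg h0]
  rw [← neg_sq, ← integral_invSqrt_mul_invSqrt hk, ← intervalIntegral.integral_ofReal]
  congr 1
  ext x
  have hc : (-l : ℂ) * Complex.exp (-(x * Complex.I)) =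
      starRingEnd ℂ (-l * Complex.exp (x * Complex.I)) := by
    rw [map_mul, map_neg, Complex.conj_ofReal, ← Complex.exp_conj, map_mul, Complex.conj_I,
      Complex.conj_ofReal, mul_neg]
  rw [hc, invSqrt_mul_invSqrt_conj (by rwa [norm_mul_cexp]), ← Complex.normSq_eq_norm_sq]
  congr 2
  rw [Complex.exp_mul_I, ← Complex.ofReal_cos, ← Complex.ofReal_sin, Complex.normSq_apply]
  simp [-Complex.ofReal_cos, -Complex.ofReal_sin]
  nlinarith [Real.sin_sq_add_cos_sq x]

lemma four_mul_tan_half_sq_div {φ : ℝ} (h : 0 < Real.cos (φ / 2)) :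
    4 * Real.tan (φ / 2) ^ 2 / (1 + Real.tan (φ / 2) ^ 2) ^ 2 = Real.sin φ ^ 2 := by
  rw [Real.tan_eq_sin_div_cos]
  have e0 : Real.sin φ = 2 * Real.sin (φ / 2) * Real.cos (φ / 2) := by
    rw [← Real.sin_two_mul, mul_div_cancel₀ _ two_ne_zero]
  have := Real.sin_sq_add_cos_sq (φ / 2)
  have e : 1 + (Real.sin (φ / 2) / Real.cos (φ / 2)) ^ 2 = 1 / Real.cos (φ / 2) ^ 2 := by
    field_simp
    linarith
  rw [e, e0]
  field_simp
  norm_num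

lemma landen_ellE {φ : ℝ} (h0 : 0 < φ) (h1 : φ < π / 2) :
    (1 + Real.tan (φ / 2) ^ 2 : ℝ) * ellE (Real.tan (φ / 2) ^ 4 : ℝ) =
      (2 * (Complex.exp (φ * Complex.I) * ellEBoundary (2 * φ)).im : ℝ) := by
  have hpi := pi_pos
  have hcos : 0 < Real.cos (φ / 2) := Real.cos_pos_of_mem_Ioo ⟨by linarith, by linarith⟩
  have htan : 0 < Real.tan (φ / 2) :=
    Real.tan_pos_of_pos_of_lt_pi_div_two (by linarith) (by linarith)
  have htan1 : Real.tan (φ / 2) < 1 := by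
    rw [← Real.tan_pi_div_four]
    exact Real.tan_lt_tan_of_lt_of_lt_pi_div_two (by linarith) (by linarith) (by linarith)
  have hE := two_pi_mul_ellE_sq (sq_nonneg (Real.tan (φ / 2)))
    (pow_lt_one₀ htan.le htan1 two_ne_zero)
  have hB := im_cexp_mul_ellEBoundary (θ := 2 * φ) (by linarith) (by linarith)
  rw [integral_landen h0 h1, show 2 * φ / 2 = φ by ring] at hB
  rw [hB]
  have hi : (1 + Real.tan (φ / 2) ^ 2) *
      (∫ x in (-π)..π, (1 + 2 * Real.tan (φ / 2) ^ 2 * Real.cos x + (Real.tan (φ / 2) ^ 2) ^ 2)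
        ^ (-(1 / 2) : ℝ)) =
      ∫ x in (-π)..π, (1 - Real.sin φ ^ 2 * Real.sin (x / 2) ^ 2) ^ (-(1 / 2) : ℝ) := by
    rw [← intervalIntegral.integral_const_mul]
    congr 1
    ext x
    have hl := four_mul_tan_half_sq_div hcos
    set l := Real.tan (φ / 2) ^ 2
    have hl0 : 0 < 1 + l := by positivity
    have hx : Real.cos x = 1 - 2 * Real.sin (x / 2) ^ 2 := by
      nth_rw 1 [show x = 2 * (x / 2) by ring]
      rw [Real.cos_two_mul', Real.cos_sq']
      ring
    have e : 1 + 2 * l * Real.cos x + l ^ 2 =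
        (1 + l) ^ 2 * (1 - Real.sin φ ^ 2 * Real.sin (x / 2) ^ 2) := by
      rw [hx, ← hl]
      field_simp
      ring
    rw [e, Real.mul_rpow (by positivity), Real.rpow_neg (by positivity), ← Real.sqrt_eq_rpow,
      Real.sqrt_sq hl0.le, ← mul_assoc, mul_inv_cancel₀ hl0.ne', one_mul]
    have := Real.sin_sq_le_one φ
    have := Real.sin_sq_le_one (x / 2)
    nlinarith [sq_nonneg (Real.sin φ)]
  rw [← hi]
  rw [show ellE (Real.tan (φ / 2) ^ 4 : ℝ) =
      (2 * π : ℂ)⁻¹ * (2 * π * ellE (((Real.tan (φ / 2) ^ 2 : ℝ) : ℂ) ^ 2)) by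
    rw [← mul_assoc, inv_mul_cancel₀ (by simp), one_mul]; congr 1; push_cast; ring, hE]
  push_cast
  ring

/-- The product `B(r, 1/2) ₃F₂(1/2, 1/2, r; 1, r + 1/2; 1)`. -/
noncomputable def betaF (r : ℝ) : ℝ :=
  betaFn r (1 / 2) * threeF2 (1 / 2) (1 / 2) r 1 (r + 1 / 2)

lemma ofReal_betaFn {a b : ℝ} (ha : 0 < a) (hb : 0 < b) :
    (betaFn a b : ℂ) = Complex.betaIntegral a b := by
  rw [Complex.betaIntegral_eq_Gamma_mul_div _ _ (by simpa) (by simpa), ← Complex.ofReal_add,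
    Complex.Gamma_ofReal, Complex.Gamma_ofReal, Complex.Gamma_ofReal, betaFn]
  norm_cast

lemma Gamma_add_nat {x : ℝ} (hx : 0 < x) (k : ℕ) :
    Real.Gamma (x + k) = poch x k * Real.Gamma x := by
  induction k with
  | zero => simp [poch_zero]
  | succ k ih =>
    have : x + k ≠ 0 := by positivity
    rw [poch_succ, Nat.cast_succ, ← add_assoc, Real.Gamma_add_one this, ih]
    ring

lemma poch_pos {x : ℝ} (hx : 0 < x) (k : ℕ) : 0 < poch x k := by
  unfold poch
  positivity

lemma poch_one (k : ℕ) : poch 1 k = (Nat.factorial k : ℝ) := by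
  induction k with
  | zero => simp [poch_zero]
  | succ k ih =>
    rw [poch_succ, ih, Nat.factorial_succ]
    push_cast
    ring

lemma betaF_eq_tsum {r : ℝ} (hr : 0 < r) :
    betaF r = ∑' k : ℕ, halfCoeff k ^ 2 * betaFn (r + k) (1 / 2) := by
  rw [betaF, threeF2, ← tsum_mul_left]
  refine tsum_congr fun k => ?_
  have h1 := poch_pos (x := r + 1 / 2) (by positivity) k
  have h2 := Real.Gamma_pos_of_pos (s := r + 1 / 2) (by positivity)
  have h3 : (0 : ℝ) < Nat.factorial k := by positivity
  rw [poch_one, betaFn, betaFn, show r + k + 1 / 2 = r + 1 / 2 + k by ring,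
    Gamma_add_nat hr, Gamma_add_nat (by positivity), halfCoeff]
  field_simp

lemma invSqrt_ofReal {t : ℝ} (ht : t < 1) :
    invSqrt (t : ℂ) = (((1 - t) ^ (-(1 / 2) : ℝ) : ℝ) : ℂ) := by
  rw [invSqrt, Complex.ofReal_cpow (by linarith)]
  push_cast
  rfl

lemma integral_pow_mul_invSqrt {r : ℝ} (hr : 0 < r) (k : ℕ) :
    ∫ t in (0 : ℝ)..1, ((t ^ (r - 1) : ℝ) : ℂ) * (invSqrt t * (t : ℂ) ^ k) =
      betaFn (r + k) (1 / 2) := by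
  rw [ofReal_betaFn (by positivity) (by positivity), Complex.betaIntegral]
  refine intervalIntegral.integral_congr_ae (.of_forall fun t ht => ?_)
  rw [uIoc_of_le zero_le_one] at ht
  rw [invSqrt, show ((r + k : ℝ) : ℂ) - 1 = ((r - 1 + k : ℝ) : ℂ) by push_cast; ring,
    ← Complex.ofReal_cpow ht.1.le, Real.rpow_add ht.1, Real.rpow_natCast]
  rw [show (((1 / 2 : ℝ) : ℂ) - 1) = -(1 / 2) by push_cast; norm_num]
  push_cast
  ring

lemma hasSum_ellE_real {t : ℝ} (h0 : 0 ≤ t) (h1 : t < 1) :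
    ∃ S : ℝ, ellE t = (S : ℂ) ∧ 0 ≤ S ∧ HasSum (fun k : ℕ => halfCoeff k ^ 2 * t ^ k) S := by
  have h := hasSum_ellE (z := (t : ℂ)) (by rwa [Complex.norm_real, Real.norm_of_nonneg h0])
  have h2 := Complex.reCLM.hasSum h
  have h3 : HasSum (fun k : ℕ => halfCoeff k ^ 2 * t ^ k) (ellE t).re := by
    refine h2.congr_fun fun k => ?_
    rw [← Complex.ofReal_pow, ← Complex.ofReal_pow, ← Complex.ofReal_mul]
    rfl
  refine ⟨_, ?_, h3.nonneg fun k => by positivity, h3⟩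
  refine h.unique ?_
  exact_mod_cast Complex.hasSum_ofReal.2 h3

lemma integral_radial {r : ℝ} (hr : 0 < r) :
    ∫ t in (0 : ℝ)..1, ((t ^ (r - 1) : ℝ) : ℂ) * genFun t = betaF r := by
  have hterm : ∀ (k : ℕ) (t : ℝ), t ∈ Ioo (0 : ℝ) 1 →
      ‖((t ^ (r - 1) : ℝ) : ℂ) * (invSqrt t * ((halfCoeff k : ℂ) ^ 2 * (t : ℂ) ^ k))‖ =
      ‖((t ^ (r - 1) : ℝ) : ℂ) * invSqrt t‖ * (halfCoeff k ^ 2 * t ^ k) := by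
    intro k t ht
    have h1 : (0 : ℝ) ≤ halfCoeff k ^ 2 * t ^ k := by have := ht.1; positivity
    rw [← mul_assoc, norm_mul, ← Complex.ofReal_pow, ← Complex.ofReal_pow, ← Complex.ofReal_mul,
      Complex.norm_real, Real.norm_of_nonneg h1]
  have hIoo : ∀ᵐ t : ℝ, t ∈ Set.uIoc (0 : ℝ) 1 → t ∈ Ioo (0 : ℝ) 1 := by
    filter_upwards [ae_ne 1] with t ht1 ht
    rw [uIoc_of_le zero_le_one] at ht
    exact ⟨ht.1, lt_of_le_of_ne ht.2 ht1⟩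
  have hsum : ∀ t ∈ Ioo (0 : ℝ) 1, HasSum (fun k : ℕ =>
      ‖((t ^ (r - 1) : ℝ) : ℂ) * (invSqrt t * ((halfCoeff k : ℂ) ^ 2 * (t : ℂ) ^ k))‖)
      ‖((t ^ (r - 1) : ℝ) : ℂ) * genFun t‖ := by
    intro t ht
    obtain ⟨S, hS, hS0, hsum⟩ := hasSum_ellE_real ht.1.le ht.2
    simp_rw [hterm _ t ht]
    rw [genFun, ← mul_assoc, norm_mul _ (ellE t), hS, Complex.norm_real, Real.norm_of_nonneg hS0]
    exact hsum.mul_left _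
  have hi := intervalIntegral.hasSum_integral_of_dominated_convergence (μ := volume)
    (a := 0) (b := 1) (f := fun t : ℝ => ((t ^ (r - 1) : ℝ) : ℂ) * genFun t)
    (F := fun (k : ℕ) (t : ℝ) =>
      ((t ^ (r - 1) : ℝ) : ℂ) * (invSqrt t * ((halfCoeff k : ℂ) ^ 2 * (t : ℂ) ^ k)))
    (fun k t => ‖((t ^ (r - 1) : ℝ) : ℂ) * (invSqrt t * ((halfCoeff k : ℂ) ^ 2 * (t : ℂ) ^ k))‖)
    (fun k => by
      refine Measurable.aestronglyMeasurable ?_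
      have := measurable_invSqrt
      fun_prop)
    (fun k => .of_forall fun t _ => le_rfl)
    (by filter_upwards [hIoo] with t ht h using (hsum t (ht h)).summable)
    (by
      refine (intervalIntegrable_radial hr).norm.congr_uIoo fun t ht => ?_
      rw [uIoo_of_le zero_le_one] at ht
      exact (hsum t ht).tsum_eq.symm)
    (by
      filter_upwards [hIoo] with t ht h
      have h2 := ht h
      refine ((hasSum_ellE ?_).mul_left _).mul_left _
      rw [Complex.norm_real, Real.norm_of_nonneg h2.1.le]
      exact h2.2)
  rw [betaF_eq_tsum hr, ← hi.tsum_eq, Complex.ofReal_tsum]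
  refine tsum_congr fun k => ?_
  rw [Complex.ofReal_mul, ← integral_pow_mul_invSqrt hr, ← intervalIntegral.integral_const_mul]
  congr 1
  ext t
  push_cast
  ring

/-- The real integrand in the Euler-type integral for `betaF r`. -/
noncomputable def betaIntegrand (r t : ℝ) : ℝ :=
  t ^ (r - 1) * ((1 - t) ^ (-(1 / 2) : ℝ) * (ellE t).re)

lemma ofReal_betaIntegrand {r t : ℝ} (ht : t ∈ Ioo (0 : ℝ) 1) :
    ((t ^ (r - 1) : ℝ) : ℂ) * genFun t = (betaIntegrand r t : ℂ) := by
  obtain ⟨S, hS, -, -⟩ := hasSum_ellE_real ht.1.le ht.2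
  rw [betaIntegrand, genFun, invSqrt_ofReal ht.2, hS, Complex.ofReal_re]
  push_cast
  ring

lemma integral_betaIntegrand {r : ℝ} (hr : 0 < r) :
    ∫ t in (0 : ℝ)..1, betaIntegrand r t = betaF r := by
  rw [← Complex.ofReal_inj, ← integral_radial hr, ← intervalIntegral.integral_ofReal]
  refine intervalIntegral.integral_congr_ae ?_
  filter_upwards [ae_ne 1] with t ht1 ht
  rw [uIoc_of_le zero_le_one] at ht
  exact (ofReal_betaIntegrand ⟨ht.1, lt_of_le_of_ne ht.2 ht1⟩).symm

lemma intervalIntegrable_betaIntegrand {r : ℝ} (hr : 0 < r) :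
    IntervalIntegrable (betaIntegrand r) volume 0 1 := by
  have h : IntervalIntegrable (fun t : ℝ => (((t ^ (r - 1) : ℝ) : ℂ) * genFun t).re)
      volume 0 1 := by
    have := intervalIntegrable_radial hr
    rw [intervalIntegrable_iff] at this ⊢
    exact this.re
  refine h.congr_uIoo fun t ht => ?_
  rw [uIoo_of_le zero_le_one] at ht
  simp only
  rw [ofReal_betaIntegrand ht, Complex.ofReal_re]

/-- Substituting `t = tan (φ / 2) ^ 4` and applying the Landen transformation. -/
lemma betaF_add_betaF {r : ℝ} (hr : 0 < r) (p : ℕ) (hp : 4 * r - 1 / 2 = p) :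
    betaF r + betaF (r + 1 / 2) = ∫ φ in (0 : ℝ)..(π / 2),
      8 * Real.cos (φ / 2) * Real.tan (φ / 2) ^ p * Real.sin (2 * φ) ^ (-(1 / 2) : ℝ) *
        (Complex.exp (φ * Complex.I) * ellEBoundary (2 * φ)).im := by
  have hpi := pi_pos
  have hcos : ∀ φ ∈ Icc (0 : ℝ) (π / 2), 0 < Real.cos (φ / 2) := fun φ hφ =>
    Real.cos_pos_of_mem_Ioo ⟨by linarith [hφ.1], by linarith [hφ.2]⟩
  have hder : ∀ φ ∈ Icc (0 : ℝ) (π / 2), HasDerivAt (fun x => Real.tan (x / 2) ^ 4)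
      (2 * Real.tan (φ / 2) ^ 3 / Real.cos (φ / 2) ^ 2) φ := fun φ hφ => by
    have h1 := ((Real.hasDerivAt_tan (hcos φ hφ).ne').comp φ ((hasDerivAt_id φ).div_const 2)).pow 4
    refine h1.congr_deriv ?_
    simp
    ring
  have key := intervalIntegral.integral_comp_mul_deriv_of_deriv_nonneg
    (f := fun x => Real.tan (x / 2) ^ 4) (a := 0) (b := π / 2)
    (g := fun t => betaIntegrand r t + betaIntegrand (r + 1 / 2) t)
    (f' := fun φ => 2 * Real.tan (φ / 2) ^ 3 / Real.cos (φ / 2) ^ 2)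
    (fun φ hφ => by
      rw [uIcc_of_le (by linarith)] at hφ
      exact (hder φ hφ).continuousAt.continuousWithinAt)
    (fun φ hφ => by
      rw [min_eq_left (by linarith), max_eq_right (by linarith)] at hφ
      exact hder φ (Ioo_subset_Icc_self hφ))
    (fun φ hφ => by
      rw [min_eq_left (by linarith), max_eq_right (by linarith)] at hφ
      have := Real.tan_nonneg_of_nonneg_of_le_pi_div_two (x := φ / 2) (by linarith [hφ.1])
        (by linarith [hφ.2])
      positivity)
  rw [show π / 2 / 2 = π / 4 by ring, Real.tan_pi_div_four, zero_div, Real.tan_zero, one_pow,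
    zero_pow (by norm_num), intervalIntegral.integral_add (intervalIntegrable_betaIntegrand hr)
    (intervalIntegrable_betaIntegrand (by positivity)), integral_betaIntegrand hr,
    integral_betaIntegrand (by positivity)] at key
  rw [← key]
  refine intervalIntegral.integral_congr_ae ?_
  filter_upwards [ae_ne (π / 2)] with φ hφ1 hφ
  rw [uIoc_of_le (by linarith)] at hφ
  have h2 : φ < π / 2 := lt_of_le_of_ne hφ.2 hφ1
  have hC := hcos φ ⟨hφ.1.le, hφ.2⟩
  have hS : 0 < Real.sin (φ / 2) := Real.sin_pos_of_pos_of_lt_pi (by linarith [hφ.1]) (by linarith)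
  have hτ : 0 < Real.tan (φ / 2) := by rw [Real.tan_eq_sin_div_cos]; positivity
  have hD : 0 < Real.cos φ := Real.cos_pos_of_mem_Ioo ⟨by linarith [hφ.1], h2⟩
  have hl := landen_ellE hφ.1 h2
  have hl' : (1 + Real.tan (φ / 2) ^ 2) * (ellE (Real.tan (φ / 2) ^ 4 : ℝ)).re =
      2 * (Complex.exp (φ * Complex.I) * ellEBoundary (2 * φ)).im := by
    rw [← Complex.re_ofReal_mul, hl, Complex.ofReal_re]
  have e1 : 1 + Real.tan (φ / 2) ^ 2 = (Real.cos (φ / 2) ^ 2)⁻¹ := by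
    rw [Real.tan_eq_sin_div_cos, div_pow]
    have := Real.sin_sq_add_cos_sq (φ / 2)
    field_simp
    linarith
  have e2 : 1 - Real.tan (φ / 2) ^ 4 = Real.cos φ / Real.cos (φ / 2) ^ 4 := by
    have h3 : Real.cos φ = Real.cos (φ / 2) ^ 2 - Real.sin (φ / 2) ^ 2 := by
      rw [← Real.cos_two_mul']; ring_nf
    have := Real.sin_sq_add_cos_sq (φ / 2)
    rw [Real.tan_eq_sin_div_cos, div_pow, h3]
    field_simp
    linear_combination (Real.cos (φ / 2) ^ 2 - Real.sin (φ / 2) ^ 2) * this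
  have e3 : Real.sin (2 * φ) = Real.tan (φ / 2) * (1 - Real.tan (φ / 2) ^ 4) *
      (2 * Real.cos (φ / 2) ^ 3) ^ 2 := by
    have h3 : Real.sin φ = 2 * Real.sin (φ / 2) * Real.cos (φ / 2) := by
      rw [← Real.sin_two_mul]; ring_nf
    rw [e2, Real.sin_two_mul, h3, Real.tan_eq_sin_div_cos]
    field_simp
  have hM : 0 < 1 - Real.tan (φ / 2) ^ 4 := by rw [e2]; positivity
  have e4 : Real.sin (2 * φ) ^ (-(1 / 2) : ℝ) = Real.tan (φ / 2) ^ (-(1 / 2) : ℝ) *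
      (1 - Real.tan (φ / 2) ^ 4) ^ (-(1 / 2) : ℝ) * (2 * Real.cos (φ / 2) ^ 3)⁻¹ := by
    rw [e3, Real.mul_rpow (by positivity) (by positivity), Real.mul_rpow hτ.le hM.le,
      Real.rpow_neg (sq_nonneg _), ← Real.sqrt_eq_rpow, Real.sqrt_sq (by positivity)]
  have e5 : (Real.tan (φ / 2) ^ 4) ^ (r - 1) =
      Real.tan (φ / 2) ^ p * Real.tan (φ / 2) ^ (-(1 / 2) : ℝ) * (Real.tan (φ / 2) ^ 3)⁻¹ := by
    rw [← Real.rpow_natCast, ← Real.rpow_mul hτ.le, ← Real.rpow_natCast, ← Real.rpow_natCast,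
      ← Real.rpow_neg hτ.le, ← Real.rpow_add hτ, ← Real.rpow_add hτ, ← hp]
    congr 1
    push_cast
    ring
  have e6 : (Real.tan (φ / 2) ^ 4) ^ (r + 1 / 2 - 1) =
      (Real.tan (φ / 2) ^ 4) ^ (r - 1) * Real.tan (φ / 2) ^ 2 := by
    rw [show r + 1 / 2 - 1 = r - 1 + 1 / 2 by ring, Real.rpow_add (by positivity),
      ← Real.sqrt_eq_rpow, show Real.tan (φ / 2) ^ 4 = (Real.tan (φ / 2) ^ 2) ^ 2 by ring,
      Real.sqrt_sq (by positivity)]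
  have hW : (Complex.exp (φ * Complex.I) * ellEBoundary (2 * φ)).im =
      (1 + Real.tan (φ / 2) ^ 2) * (ellE (Real.tan (φ / 2) ^ 4 : ℝ)).re / 2 := by
    rw [hl']; ring
  rw [Function.comp_apply, betaIntegrand, betaIntegrand, e6, e5, e4, hW]
  field_simp
  ring

/-- The integrand on the unit circle, in terms of the quarter angle. -/
noncomputable def circularIntegrand (r α : ℝ) : ℂ :=
  Complex.exp (r * α * Complex.I) *
    (invSqrt (Complex.exp (α * Complex.I)) * ellEBoundary (α / 2))

lemma integral_circularIntegrand {r : ℝ} (hr : 0 < r) :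
    ∫ φ in (0 : ℝ)..(π / 2), circularIntegrand r (4 * φ) =
      (Real.sin (π * r) * betaF r / 2 : ℝ) * Complex.exp ((π * r : ℝ) * Complex.I) := by
  rw [intervalIntegral.integral_comp_mul_left (circularIntegrand r) four_ne_zero, mul_zero,
    show 4 * (π / 2) = 2 * π by ring]
  simp only [circularIntegrand]
  rw [radial_eq_boundary hr, integral_radial hr]
  have e : (Complex.exp (2 * π * r * Complex.I) - 1) / Complex.I =
      2 * Complex.sin (π * r) * Complex.exp (π * r * Complex.I) := by
    rw [Complex.sin, show 2 * (π : ℂ) * r * Complex.I =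
      (π * r * Complex.I) + (π * r * Complex.I) by ring, Complex.exp_add, neg_mul, Complex.exp_neg]
    have := Complex.exp_ne_zero (π * r * Complex.I)
    field_simp
    rw [Complex.I_sq]
    ring
  rw [e, Complex.real_smul]
  push_cast
  ring

lemma intervalIntegrable_circularIntegrand (r : ℝ) :
    IntervalIntegrable (fun φ => circularIntegrand r (4 * φ)) volume 0 (π / 2) := by
  have h : IntervalIntegrable (circularIntegrand r) volume 0 (2 * π) :=
    intervalIntegrable_boundary r
  have := h.comp_mul_left (c := 4)
  convert this using 1 <;> ring

lemma circularIntegrand_eq {φ : ℝ} (h0 : 0 < φ) (h1 : φ < π / 2) (r : ℝ) :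
    √2 * Complex.exp (-(π / 4 * Complex.I)) * circularIntegrand r (4 * φ) =
      Complex.exp ((4 * r - 2) * φ * Complex.I) * ((Real.sin (2 * φ) ^ (-(1 / 2) : ℝ) : ℝ) *
        (Complex.exp (φ * Complex.I) * ellEBoundary (2 * φ))) := by
  have hs : 0 < Real.sin (2 * φ) := Real.sin_pos_of_pos_of_lt_pi (by linarith) (by linarith)
  have h2 : √2 * (2 * Real.sin (2 * φ)) ^ (-(1 / 2) : ℝ) = Real.sin (2 * φ) ^ (-(1 / 2) : ℝ) := by
    rw [Real.mul_rpow two_pos.le hs.le, Real.rpow_neg two_pos.le, ← Real.sqrt_eq_rpow,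
      ← mul_assoc, mul_inv_cancel₀ (by positivity), one_mul]
  rw [circularIntegrand, invSqrt_cexp (by linarith) (by linarith), show 4 * φ / 2 = 2 * φ by ring,
    ← h2]
  have e : Complex.exp (-(π / 4 * Complex.I)) * (Complex.exp (r * (4 * φ : ℝ) * Complex.I) *
      Complex.exp (((π - 4 * φ) / 4 : ℝ) * Complex.I)) =
      Complex.exp ((4 * r - 2) * φ * Complex.I) * Complex.exp (φ * Complex.I) := by
    rw [← Complex.exp_add, ← Complex.exp_add, ← Complex.exp_add]
    congr 1
    push_cast
    ring
  push_cast at e ⊢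
  linear_combination (√2 * ((2 * Real.sin (2 * φ)) ^ (-(1 / 2) : ℝ) : ℝ) * ellEBoundary (2 * φ)) * e

lemma integral_eq_im_circular (f : ℝ → ℝ) (c : ℂ) (a b : ℂ)
    (hf : ∀ φ : ℝ, 0 < φ → φ < π / 2 →
      f φ = (c * (a * circularIntegrand (5 / 8) (4 * φ) +
        b * circularIntegrand (3 / 8) (4 * φ))).im) :
    ∫ φ in (0 : ℝ)..(π / 2), f φ =
      (c * (a * ((Real.sin (π * (5 / 8)) * betaF (5 / 8) / 2 : ℝ) *
          Complex.exp ((π * (5 / 8) : ℝ) * Complex.I)) +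
        b * ((Real.sin (π * (3 / 8)) * betaF (3 / 8) / 2 : ℝ) *
          Complex.exp ((π * (3 / 8) : ℝ) * Complex.I)))).im := by
  have h1 := (intervalIntegrable_circularIntegrand (5 / 8)).const_mul a
  have h2 := (intervalIntegrable_circularIntegrand (3 / 8)).const_mul b
  rw [← integral_circularIntegrand (by norm_num), ← integral_circularIntegrand (by norm_num),
    ← intervalIntegral.integral_const_mul, ← intervalIntegral.integral_const_mul,
    ← intervalIntegral.integral_add h1 h2, ← intervalIntegral.integral_const_mul,
    ← Complex.imCLM_apply, ← Complex.imCLM.intervalIntegral_comp_comm ((h1.add h2).const_mul c)]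
  refine intervalIntegral.integral_congr_ae ?_
  filter_upwards [ae_ne (π / 2)] with φ hφ1 hφ
  rw [uIoc_of_le (by linarith [pi_pos])] at hφ
  exact hf φ hφ.1 (lt_of_le_of_ne hφ.2 hφ1)

/-- The phase-rotated integrand shared by the two linear relations. -/
lemma rotated_circularIntegrand {φ : ℝ} (h0 : 0 < φ) (h1 : φ < π / 2) :
    √2 * Complex.exp (-(π / 4 * Complex.I)) * circularIntegrand (5 / 8) (4 * φ) =
        (Complex.cos (φ / 2) + Complex.sin (φ / 2) * Complex.I) *
        ((Real.sin (2 * φ) ^ (-(1 / 2) : ℝ) : ℝ) *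
        (Complex.exp (φ * Complex.I) * ellEBoundary (2 * φ))) ∧
    √2 * Complex.exp (-(π / 4 * Complex.I)) * circularIntegrand (3 / 8) (4 * φ) =
        (Complex.cos (φ / 2) - Complex.sin (φ / 2) * Complex.I) *
        ((Real.sin (2 * φ) ^ (-(1 / 2) : ℝ) : ℝ) *
        (Complex.exp (φ * Complex.I) * ellEBoundary (2 * φ))) := by
  have e1 : Complex.cos (φ / 2) + Complex.sin (φ / 2) * Complex.I =
      Complex.exp (φ / 2 * Complex.I) := (Complex.exp_mul_I _).symm
  have e2 : Complex.cos (φ / 2) - Complex.sin (φ / 2) * Complex.I =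
      Complex.exp (-(φ / 2) * Complex.I) := by
    rw [Complex.exp_mul_I, Complex.cos_neg, Complex.sin_neg]
    ring
  rw [circularIntegrand_eq h0 h1, circularIntegrand_eq h0 h1, e1, e2]
  constructor <;> congr 2 <;> push_cast <;> ring

lemma sin_cos_pi_div_eight : Real.cos (π / 8) ^ 2 = (2 + √2) / 4 ∧
    Real.sin (π / 8) * Real.cos (π / 8) = √2 / 4 := by
  have h := Real.cos_two_mul' (π / 8)
  have h2 := Real.sin_two_mul (π / 8)
  rw [show 2 * (π / 8) = π / 4 by ring, Real.cos_pi_div_four] at h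
  rw [show 2 * (π / 8) = π / 4 by ring, Real.sin_pi_div_four] at h2
  have := Real.sin_sq_add_cos_sq (π / 8)
  constructor <;> linarith

lemma sqrt_two_mul_exp_neg : √2 * Complex.exp (-(π / 4 * Complex.I)) = 1 - Complex.I := by
  have e : (√2 : ℂ) * √2 = 2 := by
    rw [← Complex.ofReal_mul, Real.mul_self_sqrt two_pos.le]; norm_num
  rw [← neg_mul, Complex.exp_mul_I, Complex.cos_neg, Complex.sin_neg,
    show (π / 4 : ℂ) = ((π / 4 : ℝ) : ℂ) by push_cast; ring, ← Complex.ofReal_cos,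
    ← Complex.ofReal_sin, Real.cos_pi_div_four, Real.sin_pi_div_four]
  push_cast
  linear_combination (1 / 2 - Complex.I / 2) * e

lemma sin_cos_eighths : Real.sin (π * (5 / 8)) = Real.cos (π / 8) ∧
    Real.cos (π * (5 / 8)) = -Real.sin (π / 8) ∧ Real.sin (π * (3 / 8)) = Real.cos (π / 8) ∧
    Real.cos (π * (3 / 8)) = Real.sin (π / 8) := by
  rw [show π * (5 / 8) = π / 8 + π / 2 by ring, show π * (3 / 8) = π / 2 - π / 8 by ring]
  exact ⟨Real.sin_add_pi_div_two _, Real.cos_add_pi_div_two _, Real.sin_pi_div_two_sub _,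
    Real.cos_pi_div_two_sub _⟩

lemma betaF_one_eighth_add : betaF (1 / 8) + betaF (5 / 8) =
    (√2 + 1) * betaF (5 / 8) + betaF (3 / 8) := by
  have h := betaF_add_betaF (r := 1 / 8) (by norm_num) 0 (by norm_num)
  rw [integral_eq_im_circular _ (√2 * Complex.exp (-(π / 4 * Complex.I))) 4 4] at h
  · obtain ⟨h1, h2, h3, h4⟩ := sin_cos_eighths
    obtain ⟨h5, h6⟩ := sin_cos_pi_div_eight
    rw [show (1 / 8 : ℝ) + 1 / 2 = 5 / 8 by norm_num] at h
    rw [sqrt_two_mul_exp_neg, Complex.exp_mul_I, Complex.exp_mul_I, ← Complex.ofReal_cos,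
      ← Complex.ofReal_sin, ← Complex.ofReal_cos, ← Complex.ofReal_sin, h1, h2, h3, h4] at h
    simp [-Complex.ofReal_cos, -Complex.ofReal_sin, -Real.cos_pi_div_eight, -Real.sin_pi_div_eight,
      -one_div] at h
    linear_combination h + 2 * (betaF (5 / 8) + betaF (3 / 8)) * h5 +
      2 * (betaF (5 / 8) - betaF (3 / 8)) * h6
  · intro φ h0 h1
    obtain ⟨h2, h3⟩ := rotated_circularIntegrand h0 h1
    rw [mul_add, mul_left_comm, h2, mul_left_comm _ (4 : ℂ), h3, pow_zero, mul_one,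
      ← Complex.im_ofReal_mul]
    congr 1
    push_cast
    ring

lemma betaF_three_eighths_add : betaF (3 / 8) + betaF (7 / 8) =
    (√2 + 1) * betaF (3 / 8) - betaF (5 / 8) := by
  have h := betaF_add_betaF (r := 3 / 8) (by norm_num) 1 (by norm_num)
  rw [integral_eq_im_circular _ (√2 * Complex.exp (-(π / 4 * Complex.I)))
    (-4 * Complex.I) (4 * Complex.I)] at h
  · obtain ⟨h1, h2, h3, h4⟩ := sin_cos_eighths
    obtain ⟨h5, h6⟩ := sin_cos_pi_div_eight
    rw [show (3 / 8 : ℝ) + 1 / 2 = 7 / 8 by norm_num] at h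
    rw [sqrt_two_mul_exp_neg, Complex.exp_mul_I, Complex.exp_mul_I, ← Complex.ofReal_cos,
      ← Complex.ofReal_sin, ← Complex.ofReal_cos, ← Complex.ofReal_sin, h1, h2, h3, h4] at h
    simp [-Complex.ofReal_cos, -Complex.ofReal_sin, -Real.cos_pi_div_eight, -Real.sin_pi_div_eight,
      -one_div] at h
    linear_combination h + 2 * (betaF (3 / 8) - betaF (5 / 8)) * h5 +
      2 * (betaF (5 / 8) + betaF (3 / 8)) * h6
  · intro φ h0 h1
    obtain ⟨h2, h3⟩ := rotated_circularIntegrand h0 h1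
    have hC : Real.cos (φ / 2) ≠ 0 :=
      (Real.cos_pos_of_mem_Ioo ⟨by linarith [pi_pos], by linarith [pi_pos]⟩).ne'
    rw [mul_add, mul_left_comm, h2, mul_left_comm _ (4 * Complex.I), h3, pow_one,
      mul_assoc 8, mul_comm (Real.cos _) (Real.tan _), Real.tan_mul_cos hC, ← Complex.im_ofReal_mul]
    congr 1
    push_cast
    ring_nf
    rw [Complex.I_sq]
    ring

lemma Fval_eighths {r s : ℚ} (n : ℕ) (hn : 1 - 4 * (r : ℝ) = 1 / 2 - n) (hd : r.den = 8)
    (hs : s = r + 1 / 2) : Fval r s = √2 / 2 ^ n / 16 * betaF r := by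
  rw [Fval, betaF, hn, hd, hs, Rat.cast_add, add_sub_cancel_left, Real.rpow_sub two_pos,
    ← Real.sqrt_eq_rpow, Real.rpow_natCast]
  push_cast
  ring

lemma Fval_linear_relations :
    Fval (1 / 8) (5 / 8) = 2 * Fval (3 / 8) (7 / 8) + 4 * √2 * Fval (5 / 8) (9 / 8) ∧
    Fval (3 / 8) (7 / 8) = √2 * (Fval (5 / 8) (9 / 8) + 2 * Fval (7 / 8) (11 / 8)) := by
  have h1 := betaF_one_eighth_add
  have h2 := betaF_three_eighths_add
  have h3 := Real.mul_self_sqrt two_pos.le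
  rw [Fval_eighths 0 (by norm_num) (by norm_num) (by norm_num),
    Fval_eighths 1 (by norm_num) (by norm_num) (by norm_num),
    Fval_eighths 2 (by norm_num) (by norm_num) (by norm_num),
    Fval_eighths 3 (by norm_num) (by norm_num) (by norm_num)]
  push_cast
  constructor
  · linear_combination √2 / 16 * h1
  · linear_combination -(√2 / 32) * √2 / 2 * h2 + (-√2 / 64 * betaF (3 / 8)) * h3

end

open Complex in
/-- F(1/8,5/8) − 2√3·F(3/8,7/8) − 4i√3·F(5/8,9/8) − 8i·F(7/8,11/8)
    = 2·(1 − i√2 − √3)·(F(3/8,7/8) + 2i·F(5/8,9/8)). -/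
theorem lvalue_class6_simplified :
    (Fval (1/8) (5/8) : ℂ) - 2 * (Real.sqrt 3 : ℂ) * (Fval (3/8) (7/8) : ℂ) -
        4 * I * (Real.sqrt 3 : ℂ) * (Fval (5/8) (9/8) : ℂ) -
        8 * I * (Fval (7/8) (11/8) : ℂ) =
      2 * (1 - I * (Real.sqrt 2 : ℂ) - (Real.sqrt 3 : ℂ)) *
        ((Fval (3/8) (7/8) : ℂ) + 2 * I * (Fval (5/8) (9/8) : ℂ)) := by
  obtain ⟨h1, h2⟩ := Fval_linear_relations
  have h1' := congrArg ((↑) : ℝ → ℂ) h1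
  have h2' := congrArg ((↑) : ℝ → ℂ) h2
  have h3 : ((√2 : ℝ) : ℂ) * (√2 : ℝ) = 2 := by
    rw [← Complex.ofReal_mul, Real.mul_self_sqrt two_pos.le, Complex.ofReal_ofNat]
  push_cast at h1' h2'
  linear_combination h1' + 2 * I * √2 * h2' +
    (2 * I * (Fval (5 / 8) (9 / 8) + 2 * Fval (7 / 8) (11 / 8))) * h3 +
    4 * √2 * Fval (5 / 8) (9 / 8) * I_sq
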